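/- Let G be a unified chain graph (UCG) over a finite vertex set V and let p = N(0, Σ) be a Gaussian distribution on ℝ^V with Σ positive definite. Then the following are equivalent: p satisfies the global Markov property with respect to G; p satisfies the block-recursive Markov property with respect to G; p satisfies the local Markov property with respect to G; p satisfies the pairwise Markov property with respect to G. -/

import Mathlib

open Matrix MeasureTheory ProbabilityTheory

attribute [local instance] Classical.propDecidable

noncomputable section

variable {V : Type*}

/-- The submatrix of `S` with rows indexed by `X` and columns indexed by `Y`. -/
def msub (S : Matrix V V ℝ) (X Y : Finset V) : Matrix X Y ℝ :=
  Matrix.of fun i j => S i.1 j.1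

/-- Conditional independence `X ⊥ Y | Z` for a centered Gaussian distribution with
positive definite covariance matrix `S`:  `Σ_{X,Y} − Σ_{X,Z} (Σ_{Z,Z})⁻¹ Σ_{Z,Y} = 0`. -/
def gaussCI [Fintype V] [DecidableEq V] (S : Matrix V V ℝ) (X Y Z : Finset V) : Prop :=
  msub S X Y - msub S X Z * (msub S Z Z)⁻¹ * msub S Z Y = 0

/-- Pairwise disjointness of three sets. -/
def PDisj (X Y Z : Finset V) : Prop :=
  Disjoint X Y ∧ Disjoint X Z ∧ Disjoint Y Z

/-- Pairwise disjointness of four sets. -/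
def PDisj4 (X Y W Z : Finset V) : Prop :=
  Disjoint X Y ∧ Disjoint X W ∧ Disjoint X Z ∧ Disjoint Y W ∧ Disjoint Y Z ∧ Disjoint W Z

/-- A graph with three kinds of edges: undirected (`undir`), solid directed (`solid`,
written `A → B`) and dashed directed (`dashed`, written `A ⇢ B`).  No axioms are imposed. -/
structure PreGraph (V : Type*) where
  undir : V → V → Prop
  solid : V → V → Prop
  dashed : V → V → Prop

namespace PreGraph

variable (G : PreGraph V)

/-- There is an undirected edge between `a` and `b`. -/
def und (a b : V) : Prop := G.undir a b ∨ G.undir b a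

/-- `a` and `b` are adjacent. -/
def adj (a b : V) : Prop :=
  G.und a b ∨ G.solid a b ∨ G.solid b a ∨ G.dashed a b ∨ G.dashed b a

/-- The edge between `a` and `b` is undirected or directed (solid or dashed) from `a` to `b`. -/
def fwd (a b : V) : Prop := G.und a b ∨ G.solid a b ∨ G.dashed a b

/-- A route in `G`: a sequence of nodes `nodes 0, nodes 1, …, nodes len` such that
consecutive nodes are adjacent. -/
structure Route (G : PreGraph V) where
  len : ℕ
  nodes : ℕ → V
  adj_step : ∀ i < len, G.adj (nodes i) (nodes (i + 1))

/-- `c` is a collider node between `a` and `b`:  `a ⇢ c ⇠ b`, `a ⇢ c − b` (in either of the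
two traversal directions) or `a ⇢ c ← b` (in either of the two traversal directions). -/
def colliderTriple (a c b : V) : Prop :=
  (G.dashed a c ∧ G.dashed b c) ∨
  (G.dashed a c ∧ G.und c b) ∨ (G.und a c ∧ G.dashed b c) ∨
  (G.dashed a c ∧ G.solid b c) ∨ (G.solid a c ∧ G.dashed b c)

variable {G} in
/-- The node at position `k` of the route `ρ` is a collider node of `ρ`. -/
def Route.colliderNodeAt (ρ : G.Route) (k : ℕ) : Prop :=
  1 ≤ k ∧ k < ρ.len ∧ G.colliderTriple (ρ.nodes (k - 1)) (ρ.nodes k) (ρ.nodes (k + 1))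

variable {G} in
/-- The positions `p, …, q` of `ρ` form a collider section of `ρ`, i.e. a maximal undirected
subroute `C1 − ⋯ − Cn` of `ρ` such that `A → C1 − ⋯ − Cn ← B` is a subroute of `ρ`. -/
def Route.colliderSectionOcc (ρ : G.Route) (p q : ℕ) : Prop :=
  1 ≤ p ∧ p ≤ q ∧ q + 1 ≤ ρ.len ∧
  (∀ m, p ≤ m → m < q → G.und (ρ.nodes m) (ρ.nodes (m + 1))) ∧
  G.solid (ρ.nodes (p - 1)) (ρ.nodes p) ∧ G.solid (ρ.nodes (q + 1)) (ρ.nodes q)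

variable {G} in
/-- The node at position `k` of `ρ` lies in a collider section of `ρ`. -/
def Route.inColliderSectionAt (ρ : G.Route) (k : ℕ) : Prop :=
  ∃ p q, ρ.colliderSectionOcc p q ∧ p ≤ k ∧ k ≤ q

variable {G} in
/-- The route `ρ` is `Z`-open: (i) all collider nodes are in `Z`, (ii) every collider
section contains some node of `Z`, and (iii) every node which is neither a collider node
nor inside a collider section is outside `Z`. -/
def Route.IsZOpen (ρ : G.Route) (Z : Finset V) : Prop :=
  (∀ k, ρ.colliderNodeAt k → ρ.nodes k ∈ Z) ∧
  (∀ p q, ρ.colliderSectionOcc p q → ∃ m, p ≤ m ∧ m ≤ q ∧ ρ.nodes m ∈ Z) ∧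
  (∀ k ≤ ρ.len, ¬ ρ.colliderNodeAt k → ¬ ρ.inColliderSectionAt k → ρ.nodes k ∉ Z)

variable {G} in
/-- A pure collider route (with at least one edge): every intermediate node is a collider
node or lies in a collider section of the route. -/
def Route.IsPureCollider (ρ : G.Route) : Prop :=
  1 ≤ ρ.len ∧ ∀ k, 0 < k → k < ρ.len → ρ.colliderNodeAt k ∨ ρ.inColliderSectionAt k

/-- Separation `X ⊥_G Y | Z`: there is no `Z`-open route in `G` between a node of `X` and a
node of `Y`. -/
def Sep (X Y Z : Finset V) : Prop :=
  ¬ ∃ ρ : G.Route,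
      ((ρ.nodes 0 ∈ X ∧ ρ.nodes ρ.len ∈ Y) ∨ (ρ.nodes 0 ∈ Y ∧ ρ.nodes ρ.len ∈ X)) ∧
      ρ.IsZOpen Z

section Finite

variable [Fintype V] [DecidableEq V]

/-- The fathers of `X`: nodes `b` with `b → a` in `G` for some `a ∈ X`. -/
def fa (X : Finset V) : Finset V := Finset.univ.filter fun b => ∃ a ∈ X, G.solid b a

/-- The mothers of `X`: nodes `b` with `b ⇢ a` in `G` for some `a ∈ X`. -/
def mo (X : Finset V) : Finset V := Finset.univ.filter fun b => ∃ a ∈ X, G.dashed b a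

/-- The parents of `X`. -/
def pa (X : Finset V) : Finset V := G.fa X ∪ G.mo X

/-- The neighbors of `X`: nodes `b` with `b − a` in `G` for some `a ∈ X`. -/
def nb (X : Finset V) : Finset V := Finset.univ.filter fun b => ∃ a ∈ X, G.und b a

/-- There is a descending route from `a` to `b`: all edges undirected or directed in the
direction of travel, containing at least one directed edge. -/
def descends (a b : V) : Prop :=
  ∃ (n : ℕ) (f : ℕ → V), f 0 = a ∧ f n = b ∧ (∀ i < n, G.fwd (f i) (f (i + 1))) ∧
    ∃ i < n, G.solid (f i) (f (i + 1)) ∨ G.dashed (f i) (f (i + 1))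

/-- The non-descendants of `X`. -/
def nd (X : Finset V) : Finset V := Finset.univ.filter fun b => ¬ ∃ a ∈ X, G.descends a b

/-- Connectivity by undirected routes. -/
def uconn : V → V → Prop := Relation.ReflTransGen G.und

/-- The chain component containing `i`. -/
def cc (i : V) : Finset V := Finset.univ.filter fun j => G.uconn i j

/-- The set of chain components of `G`. -/
def ccs : Finset (Finset V) := Finset.univ.image G.cc

/-- The nodes incident to some edge of `G`. -/
def verts : Finset V := Finset.univ.filter fun a => ∃ b, G.adj a b

/-- `π` is a topological ordering of the chain components: it is constant on components and
increases along directed edges. -/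
def IsTopoOrder (π : V → ℕ) : Prop :=
  (∀ a b, G.uconn a b → π a = π b) ∧ ∀ a b, G.solid a b ∨ G.dashed a b → π a < π b

/-- Equation 1: for every topological ordering of the chain components, each component `K`
is independent of the preceding components minus `Pa(K)` given `Pa(K)`. -/
def eq1 (S : Matrix V V ℝ) : Prop :=
  ∀ π : V → ℕ, G.IsTopoOrder π → ∀ i : V,
    gaussCI S (G.cc i) ((Finset.univ.filter fun b => π b < π i) \ G.pa (G.cc i))
      (G.pa (G.cc i))

/-- The regression coefficients `β_K = Σ_{K,Pa(K)} (Σ_{Pa(K),Pa(K)})⁻¹`. -/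
def beta (S : Matrix V V ℝ) (K : Finset V) : Matrix K (G.pa K) ℝ :=
  msub S K (G.pa K) * (msub S (G.pa K) (G.pa K))⁻¹

/-- The conditional covariance matrix `Λ_K`. -/
def lam (S : Matrix V V ℝ) (K : Finset V) : Matrix K K ℝ :=
  msub S K K - msub S K (G.pa K) * (msub S (G.pa K) (G.pa K))⁻¹ * msub S (G.pa K) K

/-- The precision matrix `Ω = (Σ_{K ∪ Pa(K), K ∪ Pa(K)})⁻¹`. -/
def om (S : Matrix V V ℝ) (K : Finset V) : Matrix ↥(K ∪ G.pa K) ↥(K ∪ G.pa K) ℝ :=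
  (msub S (K ∪ G.pa K) (K ∪ G.pa K))⁻¹

/-- Equation 6: `(β_K)_{i,j} = 0` for all `i ∈ K` and `j ∈ Mo(K) ∖ Mo(i)`. -/
def eq6 (S : Matrix V V ℝ) : Prop :=
  ∀ K ∈ G.ccs, ∀ i (hi : i ∈ K), ∀ j (hj : j ∈ G.pa K),
    j ∈ G.mo K → j ∉ G.mo {i} → G.beta S K ⟨i, hi⟩ ⟨j, hj⟩ = 0

/-- Equation 7: `Ω_{i,j} = 0` for all `i ∈ K` and `j ∈ Fa(K) ∖ Fa(i)`. -/
def eq7 (S : Matrix V V ℝ) : Prop :=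
  ∀ K ∈ G.ccs, ∀ i (hi : i ∈ K), ∀ j (hj : j ∈ G.pa K),
    j ∈ G.fa K → j ∉ G.fa {i} →
    G.om S K ⟨i, Finset.mem_union_left _ hi⟩ ⟨j, Finset.mem_union_right _ hj⟩ = 0

/-- Equation 8: `(Λ_K⁻¹)_{i,j} = 0` for all `i ∈ K` and `j ∈ K ∖ ({i} ∪ Ne(i))`. -/
def eq8 (S : Matrix V V ℝ) : Prop :=
  ∀ K ∈ G.ccs, ∀ i (hi : i ∈ K), ∀ j (hj : j ∈ K),
    j ≠ i → j ∉ G.nb {i} → (G.lam S K)⁻¹ ⟨i, hi⟩ ⟨j, hj⟩ = 0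

/-- `p` satisfies Equation 1 and the zero restrictions of Equations 6–8 w.r.t. `G`. -/
def eqs (S : Matrix V V ℝ) : Prop := G.eq1 S ∧ G.eq6 S ∧ G.eq7 S ∧ G.eq8 S

/-- The global Markov property with respect to `G`, for an abstract ternary
(conditional-independence) relation `I`. -/
def globalMP (I : Finset V → Finset V → Finset V → Prop) : Prop :=
  ∀ X Y Z : Finset V, PDisj X Y Z → G.Sep X Y Z → I X Y Z

/-- The block-recursive Markov property (B1)–(B3) with respect to `G`. -/
def blockRecMP (I : Finset V → Finset V → Finset V → Prop) : Prop :=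
  ∀ K ∈ G.ccs, ∀ i ∈ K,
    I {i} (((G.nd K \ K) \ G.fa K) \ G.mo {i}) (G.fa K ∪ G.mo {i}) ∧
    I {i} (((G.nd K \ K) \ G.fa {i}) \ G.mo K) ((K \ {i}) ∪ G.fa {i} ∪ G.mo K) ∧
    ∀ j ∈ K, j ≠ i → j ∉ G.nb {i} → I {i} {j} ((K \ {i, j}) ∪ G.pa K)

/-- The pairwise Markov property (P1)–(P2) with respect to `G`. -/
def pairwiseMP (I : Finset V → Finset V → Finset V → Prop) : Prop :=
  ∀ i j : V, i ≠ j → ¬ G.adj i j → ∀ K ∈ G.ccs, i ∈ K →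
    (j ∈ ((G.nd {i} \ K) \ G.fa K) \ G.mo {i} → I {i} {j} ((G.nd {i} \ K) \ {j})) ∧
    (j ∈ ((G.nd {i} \ {i}) \ G.fa {i}) \ G.mo K → I {i} {j} (G.nd {i} \ {i, j}))

/-- The local Markov property (L1)–(L2) with respect to `G`. -/
def localMP (I : Finset V → Finset V → Finset V → Prop) : Prop :=
  ∀ K ∈ G.ccs, ∀ i ∈ K,
    I {i} (((G.nd {i} \ K) \ G.fa K) \ G.mo {i}) (G.fa K ∪ G.mo {i}) ∧
    I {i} ((((G.nd {i} \ {i}) \ G.pa {i}) \ G.nb {i}) \ G.mo (G.nb {i}))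
      (G.pa {i} ∪ G.nb {i} ∪ G.mo (G.nb {i}))

/-- The subgraph `G^U`: it keeps the edge `A ⊸ B` (with its type and orientation) iff `G`
has a route `A ⊸ B ⊸ ⋯ ⊸ C` with `C ∈ U`, all edges undirected or directed in the
direction of travel, and no subroute `R ⇢ S − T`. -/
def goodFrom (U : Finset V) (a b : V) : Prop :=
  ∃ (f : ℕ → V) (n : ℕ), 1 ≤ n ∧ f 0 = a ∧ f 1 = b ∧ f n ∈ U ∧
    (∀ i < n, G.fwd (f i) (f (i + 1))) ∧
    ∀ i, i + 2 ≤ n → ¬ (G.dashed (f i) (f (i + 1)) ∧ G.und (f (i + 1)) (f (i + 2)))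

/-- The graph `G^U`. -/
def derived (U : Finset V) : PreGraph V where
  undir a b := G.undir a b ∧ G.goodFrom U a b
  solid a b := G.solid a b ∧ G.goodFrom U a b
  dashed a b := G.dashed a b ∧ G.goodFrom U a b

/-- The set `Y'` used in Lemmas 2 and 3:
`Y' = {B' ∈ V(G^{X∪Y∪Z}) ∖ (X ∪ Z) : X ⊥_{G^{X∪Y∪Z}} B' | Z}`. -/
def derivedYp (X Y Z : Finset V) : Finset V :=
  ((G.derived (X ∪ Y ∪ Z)).verts \ (X ∪ Z)).filter fun b =>
    (G.derived (X ∪ Y ∪ Z)).Sep X {b} Z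

/-- The set `X' = V(G^{X∪Y∪Z}) ∖ (Y' ∪ Z)` used in Lemmas 2 and 3. -/
def derivedXp (X Y Z : Finset V) : Finset V :=
  (G.derived (X ∪ Y ∪ Z)).verts \ (G.derivedYp X Y Z ∪ Z)

end Finite

end PreGraph

/-- A chain graph: at most one edge between any pair of distinct nodes (undirected, solid
directed, or dashed directed) and no semidirected cycles. -/
structure ChainGraph (V : Type*) extends PreGraph V where
  undir_symm : ∀ a b, toPreGraph.undir a b → toPreGraph.undir b a
  undir_irrefl : ∀ a, ¬ toPreGraph.undir a a
  solid_irrefl : ∀ a, ¬ toPreGraph.solid a a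
  dashed_irrefl : ∀ a, ¬ toPreGraph.dashed a a
  undir_not_solid : ∀ a b, toPreGraph.undir a b → ¬ toPreGraph.solid a b
  undir_not_dashed : ∀ a b, toPreGraph.undir a b → ¬ toPreGraph.dashed a b
  solid_not_solid : ∀ a b, toPreGraph.solid a b → ¬ toPreGraph.solid b a
  solid_not_dashed : ∀ a b, toPreGraph.solid a b → ¬ toPreGraph.dashed a b
  solid_not_dashed_rev : ∀ a b, toPreGraph.solid a b → ¬ toPreGraph.dashed b a
  dashed_not_dashed : ∀ a b, toPreGraph.dashed a b → ¬ toPreGraph.dashed b a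
  no_semidirected_cycle : ¬ ∃ (f : ℕ → V) (n : ℕ), 1 ≤ n ∧ f n = f 0 ∧
    (toPreGraph.solid (f 0) (f 1) ∨ toPreGraph.dashed (f 0) (f 1)) ∧
    ∀ i < n, toPreGraph.fwd (f i) (f (i + 1))

namespace ChainGraph

variable (G : ChainGraph V)

/-- An LWF chain graph: no dashed directed edges. -/
def IsLWF : Prop := ∀ a b, ¬ G.toPreGraph.dashed a b

/-- An AMP chain graph: no solid directed edges. -/
def IsAMP : Prop := ∀ a b, ¬ G.toPreGraph.solid a b

/-- A unified chain graph: `Fa(K) ∩ Mo(K) = ∅` for every chain component `K`. -/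
def IsUCG [Fintype V] [DecidableEq V] : Prop :=
  ∀ K ∈ G.toPreGraph.ccs, Disjoint (G.toPreGraph.fa K) (G.toPreGraph.mo K)

end ChainGraph


/-- The AMP chain graph obtained from `G` by deleting every solid directed edge. -/
def ChainGraph.dropSolid (G : ChainGraph V) : ChainGraph V where
  undir := G.toPreGraph.undir
  solid _ _ := False
  dashed := G.toPreGraph.dashed
  undir_symm := G.undir_symm
  undir_irrefl := G.undir_irrefl
  solid_irrefl _ h := h
  dashed_irrefl := G.dashed_irrefl
  undir_not_solid _ _ _ h := h
  undir_not_dashed := G.undir_not_dashed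
  solid_not_solid _ _ h := h.elim
  solid_not_dashed _ _ h := h.elim
  solid_not_dashed_rev _ _ h := h.elim
  dashed_not_dashed := G.dashed_not_dashed
  no_semidirected_cycle := fun ⟨f, n, hn, hcyc, hstart, hsteps⟩ =>
    G.no_semidirected_cycle ⟨f, n, hn, hcyc, Or.inr (hstart.resolve_left id),
      fun i hi => (hsteps i hi).imp id (Or.imp False.elim id)⟩

/-- The restriction of `ω : V → ℝ` to the coordinates in `S`. -/
def marg (S : Finset V) : (V → ℝ) → (S → ℝ) := fun ω s => ω s.1

lemma marg_measurable (S : Finset V) : Measurable (marg (V := V) S) :=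
  measurable_pi_lambda _ fun s => measurable_pi_apply s.1

/-- Conditional independence of the coordinate tuples indexed by `X` and `Y` given the
coordinate tuple indexed by `Z`, for a distribution `μ` on `ℝ^V`. -/
def mCI [Fintype V] (μ : Measure (V → ℝ)) [IsFiniteMeasure μ] (X Y Z : Finset V) : Prop :=
  CondIndepFun (MeasurableSpace.comap (marg Z) inferInstance) ((marg_measurable Z).comap_le)
    (marg X) (marg Y) μ

/-- A probability distribution `μ` on `ℝ^V` satisfies the global Markov property with
respect to `G`. -/
def measGlobalMarkov [Fintype V] [DecidableEq V] (G : PreGraph V) (μ : Measure (V → ℝ))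
    [IsFiniteMeasure μ] : Prop :=
  ∀ X Y Z : Finset V, PDisj X Y Z → G.Sep X Y Z → mCI μ X Y Z

/-- A graphoid over `V`: a ternary relation on pairwise disjoint subsets of `V` satisfying
symmetry, decomposition, weak union, contraction and intersection. -/
structure Graphoid (V : Type*) [DecidableEq V] where
  rel : Finset V → Finset V → Finset V → Prop
  symmetry : ∀ X Y Z : Finset V, PDisj X Y Z → rel X Y Z → rel Y X Z
  decomposition : ∀ X Y W Z : Finset V, PDisj4 X Y W Z → rel X (Y ∪ W) Z → rel X Y Z
  weakUnion : ∀ X Y W Z : Finset V, PDisj4 X Y W Z → rel X (Y ∪ W) Z → rel X Y (Z ∪ W)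
  contraction : ∀ X Y W Z : Finset V, PDisj4 X Y W Z →
    rel X Y (Z ∪ W) → rel X W Z → rel X (Y ∪ W) Z
  intersection : ∀ X Y W Z : Finset V, PDisj4 X Y W Z →
    rel X Y (Z ∪ W) → rel X W (Z ∪ Y) → rel X (Y ∪ W) Z

/-- The conditional variance `Σ_{a,a|B} = Σ_{a,a} − Σ_{a,B} (Σ_{B,B})⁻¹ Σ_{B,a}`. -/
def condVar [Fintype V] [DecidableEq V] (S : Matrix V V ℝ) (a : V) (B : Finset V) : ℝ :=
  S a a - ∑ b₁ : B, ∑ b₂ : B, S a b₁.1 * (msub S B B)⁻¹ b₁ b₂ * S b₂.1 a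

section GaussianCI

theorem msub_posDef {S : Matrix V V ℝ} (hS : S.PosDef) (D : Finset V) : (msub S D D).PosDef :=
  hS.submatrix Subtype.val_injective

variable [Fintype V]

theorem Matrix.PosDef.eq_zero_of_vecMul_eq_zero_on {S : Matrix V V ℝ} (hS : S.PosDef)
    {g : V → ℝ} (h : ∀ w, g w ≠ 0 → (g ᵥ* S) w = 0) : g = 0 := by
  by_contra hg
  have hpos := hS.dotProduct_mulVec_pos hg
  rw [star_trivial, dotProduct_mulVec] at hpos
  refine hpos.ne' (Finset.sum_eq_zero fun w _ => ?_)
  by_cases hw : g w = 0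
  · simp [hw]
  · simp [h w hw]

theorem vecMul_eq_sum_coe {D : Finset V} {c : V → ℝ} (hc : ∀ v ∉ D, c v = 0)
    (S : Matrix V V ℝ) (w : V) : (c ᵥ* S) w = ∑ d : D, c d.1 * S d.1 w := by
  rw [Finset.sum_coe_sort D fun d => c d * S d w]
  refine (Finset.sum_subset (Finset.subset_univ D) fun v _ hv => ?_).symm
  simp [hc v hv]

variable [DecidableEq V]

/-- A positive definite system restricted to a set of coordinates is solvable. -/
theorem Matrix.PosDef.exists_vecMul_eq_on {S : Matrix V V ℝ} (hS : S.PosDef) (D : Finset V)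
    (b : V → ℝ) : ∃ c : V → ℝ, (∀ v ∉ D, c v = 0) ∧ ∀ w ∈ D, (c ᵥ* S) w = b w := by
  have hu := (Matrix.isUnit_iff_isUnit_det _).1 (msub_posDef hS D).isUnit
  let a : D → ℝ := (fun d : D => b d.1) ᵥ* (msub S D D)⁻¹
  have hc : ∀ v ∉ D, (fun v => if h : v ∈ D then a ⟨v, h⟩ else 0) v = 0 := fun v hv => by
    simp [hv]
  refine ⟨fun v => if h : v ∈ D then a ⟨v, h⟩ else 0, hc, fun w hw => ?_⟩
  have ha : a ᵥ* msub S D D = fun d : D => b d.1 := by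
    simp [a, vecMul_vecMul, Matrix.nonsing_inv_mul _ hu]
  rw [vecMul_eq_sum_coe hc]
  simpa [vecMul, dotProduct, msub] using congrFun ha ⟨w, hw⟩

/-- Conditional independence says that the regression of each `x ∈ X` on `Z` leaves a residual
uncorrelated with `Y`. -/
theorem gaussCI_iff_exists {S : Matrix V V ℝ} (hS : S.PosDef) (X Y Z : Finset V) :
    gaussCI S X Y Z ↔ ∀ x ∈ X, ∃ c : V → ℝ, (∀ v ∉ Z, c v = 0) ∧
      (∀ w ∈ Z, (c ᵥ* S) w = S x w) ∧ ∀ w ∈ Y, (c ᵥ* S) w = S x w := by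
  have hu := (Matrix.isUnit_iff_isUnit_det _).1 (msub_posDef hS Z).isUnit
  have key : ∀ x (hx : x ∈ X) (y) (hy : y ∈ Y) (c : V → ℝ), (∀ v ∉ Z, c v = 0) →
      (∀ w ∈ Z, (c ᵥ* S) w = S x w) →
      (msub S X Z * (msub S Z Z)⁻¹ * msub S Z Y) ⟨x, hx⟩ ⟨y, hy⟩ = (c ᵥ* S) y := by
    intro x hx y hy c hc hz
    have hrow : (fun z : Z => c z.1) ᵥ* msub S Z Z = msub S X Z ⟨x, hx⟩ := by
      funext w
      have := hz w.1 w.2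
      rw [vecMul_eq_sum_coe hc] at this
      simpa [vecMul, dotProduct, msub] using this
    have hrow' : (msub S X Z * (msub S Z Z)⁻¹) ⟨x, hx⟩ = fun z : Z => c z.1 := by
      rw [Matrix.mul_apply_eq_vecMul, ← hrow, vecMul_vecMul, Matrix.mul_nonsing_inv _ hu,
        vecMul_one]
    rw [Matrix.mul_apply_eq_vecMul, hrow', vecMul_eq_sum_coe hc]
    simp [vecMul, dotProduct, msub]
  constructor
  · intro h x hx
    obtain ⟨c, hc, hz⟩ := hS.exists_vecMul_eq_on Z (S x)
    refine ⟨c, hc, hz, fun y hy => ?_⟩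
    rw [← key x hx y hy c hc hz]
    have := congrFun (congrFun h ⟨x, hx⟩) ⟨y, hy⟩
    simp only [Matrix.sub_apply, Matrix.zero_apply] at this
    exact (sub_eq_zero.1 this).symm
  · intro h
    ext ⟨x, hx⟩ ⟨y, hy⟩
    obtain ⟨c, hc, hz, hyc⟩ := h x hx
    rw [Matrix.sub_apply, key x hx y hy c hc hz, hyc y hy]
    simp [msub]

theorem gaussCI_weakUnion {S : Matrix V V ℝ} (hS : S.PosDef) {X Y Z Y' Z' : Finset V}
    (h : gaussCI S X Y Z) (hZ : Z ⊆ Z') (hZ' : Z' ⊆ Z ∪ Y) (hY' : Y' ⊆ Z ∪ Y) :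
    gaussCI S X Y' Z' := by
  rw [gaussCI_iff_exists hS] at h ⊢
  intro x hx
  obtain ⟨c, hc, hz, hy⟩ := h x hx
  have hall : ∀ w ∈ Z ∪ Y, (c ᵥ* S) w = S x w := fun w hw =>
    (Finset.mem_union.1 hw).elim (hz w) (hy w)
  exact ⟨c, fun v hv => hc v fun h' => hv (hZ h'), fun w hw => hall w (hZ' hw),
    fun w hw => hall w (hY' hw)⟩

theorem gaussCI_contraction {S : Matrix V V ℝ} (hS : S.PosDef) {X Y W Z Z' : Finset V}
    (h₁ : gaussCI S X Y Z') (h₂ : gaussCI S X W Z) (hZ : Z ⊆ Z') (hZ' : Z' ⊆ Z ∪ W) :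
    gaussCI S X (Y ∪ W) Z := by
  rw [gaussCI_iff_exists hS] at h₁ h₂ ⊢
  intro x hx
  obtain ⟨c, hc, hz, hy⟩ := h₁ x hx
  obtain ⟨d, hd, hdz, hdw⟩ := h₂ x hx
  have hdall : ∀ w ∈ Z', (d ᵥ* S) w = S x w := fun w hw =>
    (Finset.mem_union.1 (hZ' hw)).elim (hdz w) (hdw w)
  have hcd : c - d = 0 := hS.eq_zero_of_vecMul_eq_zero_on fun w hw => by
    have hwZ : w ∈ Z' := by
      by_contra hn
      exact hw (by simp [hc w hn, hd w fun h' => hn (hZ h')])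
    rw [sub_vecMul, Pi.sub_apply, hz w hwZ, hdall w hwZ, sub_self]
  obtain rfl : c = d := sub_eq_zero.1 hcd
  exact ⟨c, hd, hdz, fun w hw => (Finset.mem_union.1 hw).elim (hy w) (hdw w)⟩

theorem gaussCI_congr {S S' : Matrix V V ℝ} {X Y Z W : Finset V} (hX : X ⊆ W) (hY : Y ⊆ W)
    (hZ : Z ⊆ W) (h : ∀ v ∈ W, ∀ w ∈ W, S v w = S' v w) (hCI : gaussCI S X Y Z) :
    gaussCI S' X Y Z := by
  have hm : ∀ A B : Finset V, A ⊆ W → B ⊆ W → msub S' A B = msub S A B := fun A B hA hB => by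
    ext a b
    exact (h _ (hA a.2) _ (hB b.2)).symm
  rw [gaussCI, hm _ _ hX hY, hm _ _ hX hZ, hm _ _ hZ hZ, hm _ _ hZ hY]
  exact hCI

/-- Separation in the zero pattern of the precision matrix `J` gives conditional
independence. -/
theorem gaussCI_of_precision_block {Γ J : Matrix V V ℝ} (hΓ : Γ.PosDef) (hJΓ : J * Γ = 1)
    {X Y Z R : Finset V} (hX : X ⊆ R) (hY : Disjoint R Y) (hZ : Disjoint R Z)
    (hJ : ∀ v ∈ R, ∀ w ∉ R, w ∉ Z → J v w = 0) : gaussCI Γ X Y Z := by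
  have hJpos : J.PosDef := by
    rw [← Matrix.inv_eq_left_inv hJΓ]
    exact hΓ.inv
  rw [gaussCI_iff_exists hΓ]
  intro x hx
  obtain ⟨a, ha, haR⟩ := hJpos.exists_vecMul_eq_on R (Pi.single x 1)
  have hout : ∀ w, w ∉ R → ((Pi.single x 1 - a ᵥ* J) ᵥ* Γ) w = Γ x w := fun w hw => by
    rw [sub_vecMul, vecMul_vecMul, hJΓ, vecMul_one, Pi.sub_apply, ha w hw, sub_zero,
      single_one_vecMul]
    rfl
  refine ⟨Pi.single x 1 - a ᵥ* J, fun v hv => ?_,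
    fun w hw => hout w fun h => Finset.disjoint_left.1 hZ h hw,
    fun w hw => hout w fun h => Finset.disjoint_left.1 hY h hw⟩
  by_cases hvR : v ∈ R
  · rw [Pi.sub_apply, haR v hvR, sub_self]
  · have hvx : v ≠ x := fun h => hvR (h ▸ hX hx)
    rw [Pi.sub_apply, Pi.single_eq_of_ne hvx, zero_sub, neg_eq_zero]
    refine Finset.sum_eq_zero fun u _ => ?_
    by_cases hu : u ∈ R
    · simp [hJ u hu v hvR hv]
    · simp [ha u hu]

end GaussianCI

theorem exists_seq_of_reflTransGen {r : V → V → Prop} {a b : V}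
    (h : Relation.ReflTransGen r a b) :
    ∃ (n : ℕ) (f : ℕ → V), f 0 = a ∧ f n = b ∧ ∀ i < n, r (f i) (f (i + 1)) := by
  induction h using Relation.ReflTransGen.head_induction_on with
  | refl => exact ⟨0, fun _ => b, rfl, rfl, fun i hi => absurd hi (Nat.not_lt_zero i)⟩
  | @head a c hac _ ih =>
    obtain ⟨n, f, h0, hn, hf⟩ := ih
    refine ⟨n + 1, fun i => Nat.casesOn i a f, rfl, hn, fun i hi => ?_⟩
    cases i with
    | zero =>
      subst h0
      exact hac
    | succ i => exact hf i (by omega)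

theorem reflTransGen_of_seq {r : V → V → Prop} {f : ℕ → V} {m n : ℕ} (hmn : m ≤ n)
    (hf : ∀ i, m ≤ i → i < n → r (f i) (f (i + 1))) :
    Relation.ReflTransGen r (f m) (f n) := by
  induction n, hmn using Nat.le_induction with
  | base => exact .refl
  | succ n hmn ih => exact (ih fun i hi hin => hf i hi (by omega)).tail (hf n hmn (by omega))

namespace PreGraph

variable {G : PreGraph V}

theorem und_comm {a b : V} : G.und a b ↔ G.und b a := or_comm

theorem uconn_symm {a b : V} (h : G.uconn a b) : G.uconn b a :=
  (@Relation.ReflTransGen.stdSymm _ _ ⟨fun _ _ => und_comm.1⟩).symm _ _ h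

theorem uconn_reach {a b : V} (h : G.uconn a b) : Relation.ReflTransGen G.fwd a b :=
  Relation.ReflTransGen.mono (fun _ _ => Or.inl) _ _ h

theorem descends_iff {a b : V} : G.descends a b ↔
    ∃ c d, Relation.ReflTransGen G.fwd a c ∧ (G.solid c d ∨ G.dashed c d) ∧
      Relation.ReflTransGen G.fwd d b := by
  constructor
  · rintro ⟨n, f, rfl, rfl, hf, i, hi, hd⟩
    exact ⟨f i, f (i + 1), reflTransGen_of_seq (Nat.zero_le _) fun j _ hj => hf j (by omega), hd,
      reflTransGen_of_seq hi fun j _ hj => hf j hj⟩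
  · rintro ⟨c, d, hac, hcd, hdb⟩
    obtain ⟨m, f, hf0, hfm, hf⟩ := exists_seq_of_reflTransGen hac
    obtain ⟨n, g, hg0, hgn, hg⟩ := exists_seq_of_reflTransGen hdb
    have hstep : ∀ i, (fun i => if i ≤ m then f i else g (i - (m + 1))) (m + 1 + i) = g i := by
      intro i
      simp [show ¬ m + 1 + i ≤ m by omega]
    refine ⟨m + 1 + n, fun i => if i ≤ m then f i else g (i - (m + 1)), by simp [hf0],
      (hstep n).trans hgn, fun i hi => ?_, m, by omega, ?_⟩
    · rcases lt_trichotomy i m with h | rfl | h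
      · simpa [h.le, Nat.succ_le_of_lt h] using hf i h
      · have h0 := hstep 0
        simp only [add_zero] at h0
        simp only [h0, le_refl, if_true, hfm, hg0]
        exact Or.inr hcd
      · obtain ⟨k, rfl⟩ := Nat.exists_eq_add_of_le (Nat.succ_le_of_lt h)
        have h1 := hstep k
        have h2 := hstep (k + 1)
        simp only [Nat.succ_eq_add_one, ← add_assoc] at h1 h2 ⊢
        rw [h1, h2]
        exact hg k (by omega)
    · have h0 := hstep 0
      simp only [add_zero] at h0
      simp only [h0, le_refl, if_true, hfm, hg0]
      exact hcd

theorem descends_of_directed {a b : V} (h : G.solid a b ∨ G.dashed a b) : G.descends a b :=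
  descends_iff.2 ⟨a, b, .refl, h, .refl⟩

theorem descends.reach_right {a b c : V} (h : G.descends a b)
    (hbc : Relation.ReflTransGen G.fwd b c) : G.descends a c := by
  obtain ⟨x, y, hx, hxy, hy⟩ := descends_iff.1 h
  exact descends_iff.2 ⟨x, y, hx, hxy, hy.trans hbc⟩

theorem descends.reach_left {a b c : V} (h : G.descends b c)
    (hab : Relation.ReflTransGen G.fwd a b) : G.descends a c := by
  obtain ⟨x, y, hx, hxy, hy⟩ := descends_iff.1 h
  exact descends_iff.2 ⟨x, y, hab.trans hx, hxy, hy⟩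

theorem descends.reach {a b : V} (h : G.descends a b) : Relation.ReflTransGen G.fwd a b := by
  obtain ⟨x, y, hx, hxy, hy⟩ := descends_iff.1 h
  exact (hx.tail (Or.inr hxy)).trans hy

section Finite

variable [Fintype V]

theorem mem_fa {X : Finset V} {b : V} : b ∈ G.fa X ↔ ∃ a ∈ X, G.solid b a := by simp [fa]

theorem mem_mo {X : Finset V} {b : V} : b ∈ G.mo X ↔ ∃ a ∈ X, G.dashed b a := by simp [mo]

theorem mem_fa_singleton {b a : V} : b ∈ G.fa {a} ↔ G.solid b a := by simp [fa]

theorem mem_mo_singleton {b a : V} : b ∈ G.mo {a} ↔ G.dashed b a := by simp [mo]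

theorem mem_nb_singleton {b a : V} : b ∈ G.nb {a} ↔ G.und b a := by simp [nb]

theorem mem_nd {X : Finset V} {b : V} : b ∈ G.nd X ↔ ∀ a ∈ X, ¬ G.descends a b := by
  simp [nd]

theorem mem_nd_singleton {a b : V} : b ∈ G.nd {a} ↔ ¬ G.descends a b := by simp [nd]

theorem mem_cc {i j : V} : j ∈ G.cc i ↔ G.uconn i j := by simp [cc]

theorem self_mem_cc (i : V) : i ∈ G.cc i := mem_cc.2 .refl

theorem cc_eq_of_uconn {i j : V} (h : G.uconn i j) : G.cc i = G.cc j := by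
  ext k
  exact mem_cc.trans (Iff.trans ⟨fun hk => (uconn_symm h).trans hk, fun hk => h.trans hk⟩
    mem_cc.symm)

theorem nd_cc (i : V) : G.nd (G.cc i) = G.nd {i} := by
  ext b
  rw [mem_nd, mem_nd_singleton]
  exact ⟨fun h => h i (self_mem_cc i), fun h a ha hab =>
    h (hab.reach_left (uconn_reach (mem_cc.1 ha)))⟩

variable [DecidableEq V]

theorem cc_mem_ccs (i : V) : G.cc i ∈ G.ccs := Finset.mem_image_of_mem _ (Finset.mem_univ i)

theorem eq_cc_of_mem_ccs {K : Finset V} (hK : K ∈ G.ccs) {i : V} (hi : i ∈ K) :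
    K = G.cc i := by
  obtain ⟨k, -, rfl⟩ := Finset.mem_image.1 hK
  exact cc_eq_of_uconn (mem_cc.1 hi)

end Finite

end PreGraph

namespace ChainGraph

open PreGraph

variable (G : ChainGraph V)

theorem not_directed_of_und {a b : V} (h : G.und a b) :
    ¬ G.solid a b ∧ ¬ G.solid b a ∧ ¬ G.dashed a b ∧ ¬ G.dashed b a := by
  have h₁ : G.undir a b := h.elim id (G.undir_symm b a)
  have h₂ : G.undir b a := G.undir_symm a b h₁
  exact ⟨G.undir_not_solid _ _ h₁, G.undir_not_solid _ _ h₂, G.undir_not_dashed _ _ h₁,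
    G.undir_not_dashed _ _ h₂⟩

theorem not_of_solid {a b : V} (h : G.solid a b) :
    ¬ G.und a b ∧ ¬ G.und b a ∧ ¬ G.solid b a ∧ ¬ G.dashed a b ∧ ¬ G.dashed b a :=
  ⟨fun hu => (G.not_directed_of_und hu).1 h, fun hu => (G.not_directed_of_und hu).2.1 h,
    G.solid_not_solid _ _ h, G.solid_not_dashed _ _ h, G.solid_not_dashed_rev _ _ h⟩

theorem not_of_dashed {a b : V} (h : G.dashed a b) :
    ¬ G.und a b ∧ ¬ G.und b a ∧ ¬ G.dashed b a ∧ ¬ G.solid a b ∧ ¬ G.solid b a :=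
  ⟨fun hu => (G.not_directed_of_und hu).2.2.1 h, fun hu => (G.not_directed_of_und hu).2.2.2 h,
    G.dashed_not_dashed _ _ h, fun hs => G.solid_not_dashed _ _ hs h,
    fun hs => G.solid_not_dashed_rev _ _ hs h⟩

theorem not_reach_of_directed {a b : V} (h : G.solid a b ∨ G.dashed a b) :
    ¬ Relation.ReflTransGen G.fwd b a := by
  intro hba
  obtain ⟨n, f, h0, hn, hf⟩ := exists_seq_of_reflTransGen hba
  refine G.no_semidirected_cycle ⟨fun i => Nat.casesOn i a f, n + 1, by omega, hn, ?_, ?_⟩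
  · subst h0
    exact h
  · rintro (_ | i) hi
    · subst h0
      exact Or.inr h
    · exact hf i (by omega)

theorem not_reach_of_descends {a b : V} (h : G.descends a b) :
    ¬ Relation.ReflTransGen G.fwd b a := by
  intro hba
  obtain ⟨x, y, hx, hxy, hy⟩ := descends_iff.1 h
  exact G.not_reach_of_directed hxy ((hy.trans hba).trans hx)

theorem not_descends_of_directed {a b c : V} (h : G.solid a b ∨ G.dashed a b)
    (hbc : G.uconn b c) : ¬ G.descends c a := fun hca =>
  G.not_reach_of_directed h ((uconn_reach hbc).trans hca.reach)

theorem not_uconn_of_directed {a b c : V} (h : G.solid a b ∨ G.dashed a b)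
    (hbc : G.uconn b c) : ¬ G.uconn c a := fun hca =>
  G.not_reach_of_directed h ((uconn_reach hbc).trans (uconn_reach hca))

theorem not_descends_of_uconn {a b : V} (h : G.uconn a b) : ¬ G.descends a b := fun hab =>
  G.not_reach_of_descends hab (uconn_reach (uconn_symm h))

end ChainGraph

/-- How a route being traversed arrives at its current node: `tail` (at the start or against a
directed edge), `undirected` (inside a section that cannot be a collider section), `dashed`
(along a dashed edge), `solidOut` (in a section entered along a solid edge that will not be left
against a solid edge), and `solidIn` or `solidInHit` (in a section entered along a solid edge
that will be left against a solid edge, before or after having met the conditioning set). -/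
inductive Arrival
  | tail | undirected | dashed | solidOut | solidIn | solidInHit

namespace Arrival

/-- The current node may still turn out to be a non-collider outside collider sections. -/
def Passive (a : Arrival) : Prop := a ≠ solidIn ∧ a ≠ solidInHit

/-- The current node was not reached along its arrowhead and its section cannot be a collider
section. -/
def Loose (a : Arrival) : Prop := a = tail ∨ a = undirected

end Arrival

namespace PreGraph

/-- The admissible one-edge continuations of a `Z`-open route. -/
inductive OpenStep (G : PreGraph V) (Z : Finset V) : Arrival → V → Arrival → V → Prop
  | solidOut {a b c d} (ha : a.Passive) (hc : c ∉ Z) (h : G.solid c d)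
      (hb : b = .solidOut ∨ b = .solidIn) : OpenStep G Z a c b d
  | dashedOut {a c d} (ha : a.Passive) (hc : c ∉ Z) (h : G.dashed c d) :
      OpenStep G Z a c .dashed d
  | und {a b c d} (h : G.und c d)
      (hab : a.Loose ∧ c ∉ Z ∧ b = .undirected ∨ a = .dashed ∧ c ∈ Z ∧ b = .undirected ∨
        a = .solidOut ∧ c ∉ Z ∧ b = .solidOut ∨ a = .solidIn ∧ c ∉ Z ∧ b = .solidIn ∨
        a = .solidIn ∧ c ∈ Z ∧ b = .solidInHit ∨ a = .solidInHit ∧ b = .solidInHit) :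
      OpenStep G Z a c b d
  | solidIn {a c d} (h : G.solid d c)
      (ha : a.Loose ∧ c ∉ Z ∨ a = .dashed ∧ c ∈ Z ∨ a = .solidIn ∧ c ∈ Z ∨ a = .solidInHit) :
      OpenStep G Z a c .tail d
  | dashedIn {a c d} (h : G.dashed d c)
      (ha : a = .tail ∧ c ∉ Z ∨
        (a = .undirected ∨ a = .dashed ∨ a = .solidOut) ∧ c ∈ Z) :
      OpenStep G Z a c .tail d

/-- The nodes, with their manner of arrival, at the end of a `Z`-open partial route from `X`. -/
inductive OpenReach (G : PreGraph V) (X Z : Finset V) : Arrival → V → Prop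
  | start {x} (hx : x ∈ X) : OpenReach G X Z .tail x
  | step {a b c d} (hc : OpenReach G X Z a c) (h : OpenStep G Z a c b d) : OpenReach G X Z b d

/-- `f` visits `f 0, …, f n` with arrivals `s`, along admissible steps. -/
structure OpenRun (G : PreGraph V) (X Z : Finset V) (s : ℕ → Arrival) (f : ℕ → V) (n : ℕ) :
    Prop where
  start_mem : f 0 ∈ X
  start_tail : s 0 = .tail
  step : ∀ i < n, OpenStep G Z (s i) (f i) (s (i + 1)) (f (i + 1))

theorem OpenReach.exists_run {G : PreGraph V} {X Z : Finset V} {a : Arrival} {c : V}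
    (h : OpenReach G X Z a c) :
    ∃ s f n, OpenRun G X Z s f n ∧ s n = a ∧ f n = c := by
  induction h with
  | @start x hx => exact ⟨fun _ => .tail, fun _ => x, 0, ⟨hx, rfl, by simp⟩, rfl, rfl⟩
  | @step a b c d _ h ih =>
    obtain ⟨s, f, n, hrun, rfl, rfl⟩ := ih
    refine ⟨fun i => if i ≤ n then s i else b, fun i => if i ≤ n then f i else d, n + 1,
      ⟨by simpa using hrun.start_mem, by simpa using hrun.start_tail, fun i hi => ?_⟩,
      by simp, by simp⟩
    rcases Nat.lt_succ_iff_lt_or_eq.1 hi with hi | rfl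
    · simpa [hi.le, Nat.succ_le_of_lt hi] using hrun.step i hi
    · simpa using h

theorem OpenStep.adj {G : PreGraph V} {Z : Finset V} {a b : Arrival} {c d : V}
    (h : OpenStep G Z a c b d) : G.adj c d := by
  cases h <;> simp [PreGraph.adj, *]

end PreGraph

namespace ChainGraph

open PreGraph

variable {G : ChainGraph V} {X Z : Finset V}

theorem colliderTriple_comm {H : PreGraph V} {a c b : V} :
    H.colliderTriple a c b ↔ H.colliderTriple b c a := by
  unfold colliderTriple
  rw [und_comm (a := a) (b := c), und_comm (a := c) (b := b)]
  tauto

/-- What the arrival says about the last edge. -/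
theorem _root_.PreGraph.OpenStep.arrival {H : PreGraph V} {Z : Finset V} {a b : Arrival}
    {c d : V} (h : OpenStep H Z a c b d) :
    (b = .tail ∧ (H.solid d c ∨ H.dashed d c)) ∨
    (b = .undirected ∧ H.und c d) ∨ (b = .dashed ∧ H.dashed c d) ∨
    (b = .solidOut ∧ (H.solid c d ∨ H.und c d ∧ a = .solidOut)) ∨
    (b = .solidIn ∧ (H.solid c d ∨ H.und c d ∧ a = .solidIn)) ∨
    (b = .solidInHit ∧ H.und c d ∧ (a = .solidIn ∨ a = .solidInHit)) := by
  cases h with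
  | solidOut _ _ h hb => rcases hb with rfl | rfl <;> simp [h]
  | dashedOut _ _ h => simp [h]
  | und h hab =>
    rcases hab with ⟨_, _, rfl⟩ | ⟨_, _, rfl⟩ | ⟨rfl, _, rfl⟩ | ⟨rfl, _, rfl⟩ | ⟨rfl, _, rfl⟩ |
      ⟨rfl, rfl⟩ <;> simp [h]
  | solidIn h _ => simp [h]
  | dashedIn h _ => simp [h]

/-- A step departing from a node of `Z`. -/
theorem _root_.PreGraph.OpenStep.of_mem {H : PreGraph V} {Z : Finset V} {a b : Arrival}
    {c d : V} (h : OpenStep H Z a c b d) (hc : c ∈ Z) :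
    (a = .solidIn ∨ a = .solidInHit) ∨
    (a = .dashed ∧ (H.und c d ∨ H.solid d c ∨ H.dashed d c)) ∨
    ((a = .undirected ∨ a = .solidOut) ∧ H.dashed d c) := by
  cases h <;> simp_all [Arrival.Loose] <;> tauto

theorem openStep_of_und {a b : Arrival} {c d : V} (e : G.und c d)
    (h : OpenStep G.toPreGraph Z a c b d) :
    a.Loose ∧ c ∉ Z ∧ b = .undirected ∨ a = .dashed ∧ c ∈ Z ∧ b = .undirected ∨
      a = .solidOut ∧ c ∉ Z ∧ b = .solidOut ∨ a = .solidIn ∧ c ∉ Z ∧ b = .solidIn ∨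
      a = .solidIn ∧ c ∈ Z ∧ b = .solidInHit ∨ a = .solidInHit ∧ b = .solidInHit := by
  have e := G.not_directed_of_und e
  cases h <;> first | assumption | simp_all

theorem openStep_of_solid {a b : Arrival} {c d : V} (e : G.solid c d)
    (h : OpenStep G.toPreGraph Z a c b d) :
    a.Passive ∧ c ∉ Z ∧ (b = .solidOut ∨ b = .solidIn) := by
  have e := G.not_of_solid e
  cases h <;> first | exact ⟨‹_›, ‹_›, ‹_›⟩ | simp_all

theorem openStep_of_solid_rev {a b : Arrival} {c d : V} (e : G.solid d c)
    (h : OpenStep G.toPreGraph Z a c b d) :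
    (a.Loose ∧ c ∉ Z ∨ a = .dashed ∧ c ∈ Z ∨ a = .solidIn ∧ c ∈ Z ∨ a = .solidInHit) ∧
      b = .tail := by
  have e := G.not_of_solid e
  cases h <;> first | exact ⟨‹_›, rfl⟩ | simp_all

theorem mem_of_colliderTriple {a₀ a b : Arrival} {b₀ c d : V}
    (h₁ : OpenStep G.toPreGraph Z a₀ b₀ a c) (h₂ : OpenStep G.toPreGraph Z a c b d)
    (hcol : G.colliderTriple b₀ c d) : c ∈ Z := by
  by_contra hc
  have hin := h₁.arrival
  rcases hcol with ⟨h, h'⟩ | ⟨h, h'⟩ | ⟨h, h'⟩ | ⟨h, h'⟩ | ⟨h, h'⟩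
  all_goals first
    | have e := G.not_of_dashed h
    | have e := G.not_of_solid h
    | have e := G.not_directed_of_und h
  all_goals first
    | have e' := G.not_of_dashed h'
    | have e' := G.not_of_solid h'
    | have e' := G.not_directed_of_und h'
  all_goals cases h₂ <;> simp_all [Arrival.Loose]

theorem _root_.PreGraph.OpenRun.isZOpen {s : ℕ → Arrival} {f : ℕ → V} {n : ℕ}
    (h : OpenRun G.toPreGraph X Z s f n) (hpass : (s n).Passive) (hn : f n ∉ Z) :
    (⟨n, f, fun i hi => (h.step i hi).adj⟩ : G.toPreGraph.Route).IsZOpen Z := by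
  have hpred : ∀ k, 1 ≤ k → k ≤ n → OpenStep G.toPreGraph Z (s (k - 1)) (f (k - 1)) (s k) (f k) :=
    fun k hk hkn => by
      have := h.step (k - 1) (by omega)
      rwa [Nat.sub_add_cancel hk] at this
  refine ⟨?_, ?_, ?_⟩
  · rintro k ⟨hk, hkn, hcol⟩
    exact mem_of_colliderTriple (hpred k hk hkn.le) (h.step k hkn) hcol
  · rintro p q ⟨hp, hpq, hqn, hund, hin, hout⟩
    change q + 1 ≤ n at hqn
    dsimp only at hund hin hout ⊢
    have hinv : ∀ m, p ≤ m → m ≤ q → s m = .solidOut ∨ s m = .solidIn ∨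
        s m = .solidInHit ∧ ∃ k, p ≤ k ∧ k < m ∧ f k ∈ Z := by
      intro m hpm
      induction m, hpm using Nat.le_induction with
      | base =>
        intro _
        have := (openStep_of_solid hin (hpred p hp (by omega))).2.2
        tauto
      | succ m hpm ih =>
        intro hm
        have hs := openStep_of_und (hund m hpm (by omega)) (h.step m (by omega))
        rcases ih (by omega) with h' | h' | ⟨h', k, hk, hkm, hkZ⟩
        · simp_all [Arrival.Loose]
        · simp only [h', Arrival.Loose, reduceCtorEq, false_and, or_false, false_or, true_and]
            at hs
          rcases hs with hs | hs
          · exact Or.inr (Or.inl hs.2)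
          · exact Or.inr (Or.inr ⟨hs.2, m, hpm, by omega, hs.1⟩)
        · simp only [h', Arrival.Loose, reduceCtorEq, false_and, or_false, false_or, true_and]
            at hs
          exact Or.inr (Or.inr ⟨hs, k, hk, by omega, hkZ⟩)
    have hs := (openStep_of_solid_rev hout (h.step q (by omega))).1
    rcases hinv q hpq le_rfl with h' | h' | ⟨h', k, hk, hkm, hkZ⟩
    · simp [h', Arrival.Loose] at hs
    · exact ⟨q, hpq, le_rfl, by simpa [h', Arrival.Loose] using hs⟩
    · exact ⟨k, hk, hkm.le, hkZ⟩
  · intro k hkn hcol hsec hkZ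
    change k ≤ n at hkn
    dsimp only at hkZ
    rcases hkn.eq_or_lt with rfl | hkn
    · exact hn hkZ
    have hk : s k ≠ .tail → 1 ≤ k := fun hne =>
      Nat.one_le_iff_ne_zero.2 fun h0 => hne (h0 ▸ h.start_tail)
    have hback : ∀ m ≤ n, s m = .solidIn ∨ s m = .solidInHit → ∃ p, 1 ≤ p ∧ p ≤ m ∧
        (∀ i, p ≤ i → i < m → G.und (f i) (f (i + 1))) ∧ G.solid (f (p - 1)) (f p) := by
      intro m
      induction m with
      | zero => simp [h.start_tail]
      | succ m ih =>
        intro hm hsm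
        have hfst : G.solid (f m) (f (m + 1)) ∨
            G.und (f m) (f (m + 1)) ∧ (s m = .solidIn ∨ s m = .solidInHit) := by
          have := (h.step m (by omega)).arrival
          rcases hsm with hsm | hsm <;> simp_all; tauto
        rcases hfst with hsol | ⟨hu, hs⟩
        · exact ⟨m + 1, by omega, le_rfl, fun i h₁ h₂ => by omega, hsol⟩
        · obtain ⟨p, hp, hpm, hund, hin⟩ := ih (by omega) hs
          refine ⟨p, hp, by omega, fun i hi him => ?_, hin⟩
          rcases Nat.lt_succ_iff_lt_or_eq.1 him with him | rfl
          · exact hund i hi him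
          · exact hu
    have hforw : ∀ d m, m + d = n → s m = .solidIn ∨ s m = .solidInHit → ∃ q, m ≤ q ∧ q < n ∧
        (∀ i, m ≤ i → i < q → G.und (f i) (f (i + 1))) ∧ G.solid (f (q + 1)) (f q) := by
      intro d
      induction d with
      | zero =>
        rintro m rfl hs
        exact absurd hs (not_or.2 hpass)
      | succ d ih =>
        intro m hm hs
        have hnext : G.solid (f (m + 1)) (f m) ∨
            G.und (f m) (f (m + 1)) ∧ (s (m + 1) = .solidIn ∨ s (m + 1) = .solidInHit) := by
          have hst := h.step m (by omega)
          generalize s (m + 1) = b, s m = a at hst hs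
          cases hst <;> rcases hs with rfl | rfl <;> simp_all [Arrival.Passive, Arrival.Loose]
          tauto
        rcases hnext with hsol | ⟨hu, hs'⟩
        · exact ⟨m, le_rfl, by omega, fun i h₁ h₂ => by omega, hsol⟩
        · obtain ⟨q, hq, hqn, hund, hout⟩ := ih (m + 1) (by omega) hs'
          refine ⟨q, by omega, hqn, fun i hi hiq => ?_, hout⟩
          rcases hi.eq_or_lt with rfl | hi
          · exact hu
          · exact hund i hi hiq
    rcases (h.step k hkn).of_mem hkZ with hs | ⟨hs, hd⟩ | ⟨hs, hd⟩
    · obtain ⟨p, hp, hpk, hund₁, hin⟩ := hback k hkn.le hs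
      obtain ⟨q, hkq, hqn, hund₂, hout⟩ := hforw (n - k) k (by omega) hs
      refine hsec ⟨p, q, ⟨hp, by omega, hqn, fun m hpm hmq => ?_, hin, hout⟩, hpk, hkq⟩
      rcases lt_or_ge m k with hmk | hmk
      · exact hund₁ m hpm hmk
      · exact hund₂ m hmk hmq
    · have hk1 := hk (by simp [hs])
      have hd' : G.dashed (f (k - 1)) (f k) := by
        have := (hpred k hk1 hkn.le).arrival
        simp_all
      refine hcol ⟨hk1, hkn, ?_⟩
      unfold colliderTriple
      tauto
    · have hk1 := hk (by rcases hs with hs | hs <;> simp [hs])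
      have hd' : G.und (f (k - 1)) (f k) ∨ G.solid (f (k - 1)) (f k) := by
        have := (hpred k hk1 hkn.le).arrival
        rcases hs with hs | hs <;> simp_all
        tauto
      refine hcol ⟨hk1, hkn, ?_⟩
      unfold colliderTriple
      tauto

set_option maxHeartbeats 400000 in
/-- A `Z`-open route visits its last node in an admissible manner. -/
theorem _root_.PreGraph.Route.IsZOpen.exists_openReach {ρ : G.toPreGraph.Route}
    (h : ρ.IsZOpen Z) (h0 : ρ.nodes 0 ∈ X) :
    ∃ a : Arrival, a.Passive ∧ OpenReach G.toPreGraph X Z a (ρ.nodes ρ.len) := by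
  obtain ⟨n, f, hadj⟩ := ρ
  obtain ⟨hcol, hsec, hfree⟩ := h
  set ρ : G.toPreGraph.Route := ⟨n, f, hadj⟩ with hρ
  change f 0 ∈ X at h0
  change ∃ a : Arrival, a.Passive ∧ OpenReach G.toPreGraph X Z a (f n)
  have hsection_succ : ∀ k, G.und (f k) (f (k + 1)) →
      (ρ.inColliderSectionAt k ↔ ρ.inColliderSectionAt (k + 1)) := by
    intro k hk
    have e := G.not_directed_of_und hk
    constructor
    · rintro ⟨p, q, hocc, hpk, hkq⟩
      refine ⟨p, q, hocc, by omega, ?_⟩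
      rcases hkq.eq_or_lt with rfl | h'
      · exact absurd hocc.2.2.2.2.2 e.2.1
      · exact h'
    · rintro ⟨p, q, hocc, hpk, hkq⟩
      refine ⟨p, q, hocc, ?_, by omega⟩
      rcases hpk.eq_or_lt with rfl | h'
      · exact absurd hocc.2.2.2.2.1 e.1
      · omega
  have hsection_dir : ∀ k, ¬ G.und (f k) (f (k + 1)) → ρ.inColliderSectionAt k →
      G.solid (f (k + 1)) (f k) := by
    rintro k hk ⟨p, q, hocc, hpk, hkq⟩
    rcases hkq.eq_or_lt with rfl | h'
    · exact hocc.2.2.2.2.2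
    · exact absurd (hocc.2.2.2.1 k hpk h') hk
  have hsection_start : ∀ k, ¬ G.und (f k) (f (k + 1)) → ρ.inColliderSectionAt (k + 1) →
      G.solid (f k) (f (k + 1)) := by
    rintro k hk ⟨p, q, hocc, hpk, hkq⟩
    rcases hpk.eq_or_lt with rfl | h'
    · exact hocc.2.2.2.2.1
    · exact absurd (hocc.2.2.2.1 k (by omega) (by omega)) hk
  have hmain : ∀ k ≤ n, ∃ a, OpenReach G.toPreGraph X Z a (f k) ∧
      (a = .tail ∧ ¬ ρ.inColliderSectionAt k ∧
        (1 ≤ k → G.solid (f k) (f (k - 1)) ∨ G.dashed (f k) (f (k - 1))) ∨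
      a = .undirected ∧ ¬ ρ.inColliderSectionAt k ∧ 1 ≤ k ∧ G.und (f (k - 1)) (f k) ∨
      a = .dashed ∧ ¬ ρ.inColliderSectionAt k ∧ 1 ≤ k ∧ G.dashed (f (k - 1)) (f k) ∨
      ∃ p, 1 ≤ p ∧ p ≤ k ∧ (∀ i, p ≤ i → i < k → G.und (f i) (f (i + 1))) ∧
        G.solid (f (p - 1)) (f p) ∧
        (a = .solidOut ∧ ¬ ρ.inColliderSectionAt k ∨
          a = .solidIn ∧ ρ.inColliderSectionAt k ∧ (∀ i, p ≤ i → i < k → f i ∉ Z) ∨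
          a = .solidInHit ∧ ρ.inColliderSectionAt k)) := by
    intro k
    induction k with
    | zero =>
      intro _
      refine ⟨.tail, .start h0, Or.inl ⟨rfl, ?_, by simp⟩⟩
      rintro ⟨p, q, hocc, hp, -⟩
      have := hocc.1
      omega
    | succ k ih =>
      intro hk
      obtain ⟨a, ha, hinfo⟩ := ih (by omega)
      have hprev : ∀ p, 1 ≤ p → p ≤ k → (∀ i, p ≤ i → i < k → G.und (f i) (f (i + 1))) →
          G.solid (f (p - 1)) (f p) →
          1 ≤ k ∧ (G.solid (f (k - 1)) (f k) ∨ G.und (f (k - 1)) (f k)) := by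
        intro p hp hpk hund hin
        refine ⟨by omega, ?_⟩
        rcases hpk.eq_or_lt with rfl | h'
        · exact Or.inl hin
        · have := hund (k - 1) (by omega) (by omega)
          rw [Nat.sub_add_cancel (by omega)] at this
          exact Or.inr this
      have hin : ¬ ρ.inColliderSectionAt k →
          (1 ≤ k → ¬ G.colliderTriple (f (k - 1)) (f k) (f (k + 1))) → f k ∉ Z :=
        fun h₁ h₂ => hfree k (Nat.le_of_succ_le hk) (fun h => h₂ h.1 h.2.2) h₁
      have hmem : 1 ≤ k → G.colliderTriple (f (k - 1)) (f k) (f (k + 1)) → f k ∈ Z :=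
        fun h₁ h₂ => hcol k ⟨h₁, hk, h₂⟩
      have hpass : ¬ ρ.inColliderSectionAt k → a.Passive := by
        intro hs
        unfold Arrival.Passive
        rcases hinfo with ⟨rfl, -⟩ | ⟨rfl, -⟩ | ⟨rfl, -⟩ |
          ⟨p, -, -, -, -, ⟨rfl, -⟩ | ⟨-, h, -⟩ | ⟨-, h⟩⟩
        all_goals first
          | exact absurd h hs
          | simp
      unfold colliderTriple at hin hmem
      rcases hadj k hk with e | e | e | e | e
      · have hsk := hsection_succ k e
        have e' := G.not_directed_of_und e
        simp only [e, e', and_true, and_false, or_false, false_or] at hin hmem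
        rcases hinfo with ⟨rfl, hs, hp⟩ | ⟨rfl, hs, hk1, hp⟩ | ⟨rfl, hs, hk1, hp⟩ |
          ⟨p, hp, hpk, hund, hsol, hinfo⟩
        · have hc : f k ∉ Z := hin hs fun hk1 hd => by
            have := G.not_of_dashed hd
            rcases hp hk1 with h | h <;> simp_all
          exact ⟨.undirected, ha.step (.und e (by simp [Arrival.Loose, hc])),
            Or.inr (Or.inl ⟨rfl, by rwa [← hsk], by omega, e⟩)⟩
        · have hc : f k ∉ Z := hin hs fun hk1 hd => (G.not_of_dashed hd).1 hp
          exact ⟨.undirected, ha.step (.und e (by simp [Arrival.Loose, hc])),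
            Or.inr (Or.inl ⟨rfl, by rwa [← hsk], by omega, e⟩)⟩
        · have hc : f k ∈ Z := hmem hk1 hp
          exact ⟨.undirected, ha.step (.und e (by simp [hc])),
            Or.inr (Or.inl ⟨rfl, by rwa [← hsk], by omega, e⟩)⟩
        · have hund' : ∀ i, p ≤ i → i < k + 1 → G.und (f i) (f (i + 1)) := fun i hi hik => by
            rcases Nat.lt_succ_iff_lt_or_eq.1 hik with h | rfl
            · exact hund i hi h
            · exact e
          rcases hinfo with ⟨rfl, hs⟩ | ⟨rfl, hs, hno⟩ | ⟨rfl, hs⟩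
          · have hc : f k ∉ Z := hin hs fun hk1 hd => by
              have hd' := G.not_of_dashed hd
              rcases (hprev p hp hpk hund hsol).2 with h | h
              exacts [hd'.2.2.2.1 h, hd'.1 h]
            exact ⟨.solidOut, ha.step (.und e (by simp [hc])), Or.inr (Or.inr (Or.inr
              ⟨p, hp, by omega, hund', hsol, Or.inl ⟨rfl, by rwa [← hsk]⟩⟩))⟩
          · by_cases hc : f k ∈ Z
            · exact ⟨.solidInHit, ha.step (.und e (by simp [hc])), Or.inr (Or.inr (Or.inr
                ⟨p, hp, by omega, hund', hsol, Or.inr (Or.inr ⟨rfl, hsk.1 hs⟩)⟩))⟩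
            · refine ⟨.solidIn, ha.step (.und e (by simp [hc])), Or.inr (Or.inr (Or.inr
                ⟨p, hp, by omega, hund', hsol, Or.inr (Or.inl ⟨rfl, hsk.1 hs, ?_⟩)⟩))⟩
              intro i hi hik
              rcases Nat.lt_succ_iff_lt_or_eq.1 hik with h | rfl
              · exact hno i hi h
              · exact hc
          · exact ⟨.solidInHit, ha.step (.und e (by simp)), Or.inr (Or.inr (Or.inr
              ⟨p, hp, by omega, hund', hsol, Or.inr (Or.inr ⟨rfl, hsk.1 hs⟩)⟩))⟩
      · have e' := G.not_of_solid e
        have hs : ¬ ρ.inColliderSectionAt k := fun hs => e'.2.2.1 (hsection_dir k e'.1 hs)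
        have hc : f k ∉ Z := hin hs (by simp [e'])
        by_cases hs' : ρ.inColliderSectionAt (k + 1)
        · exact ⟨.solidIn, ha.step (.solidOut (hpass hs) hc e (by simp)), Or.inr (Or.inr (Or.inr
            ⟨k + 1, by omega, le_rfl, fun i _ _ => by omega, e,
              Or.inr (Or.inl ⟨rfl, hs', fun i _ _ => by omega⟩)⟩))⟩
        · exact ⟨.solidOut, ha.step (.solidOut (hpass hs) hc e (by simp)), Or.inr (Or.inr (Or.inr
            ⟨k + 1, by omega, le_rfl, fun i _ _ => by omega, e, Or.inl ⟨rfl, hs'⟩⟩))⟩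
      · have e' := G.not_of_solid e
        have hs' : ¬ ρ.inColliderSectionAt (k + 1) := fun hs =>
          e'.2.2.1 (hsection_start k e'.2.1 hs)
        simp only [e, e', and_true, and_false, or_false, false_or] at hin hmem
        refine ⟨.tail, ha.step (.solidIn e ?_), Or.inl ⟨rfl, hs', fun _ => Or.inl e⟩⟩
        rcases hinfo with ⟨rfl, hs, hp⟩ | ⟨rfl, hs, hk1, hp⟩ | ⟨rfl, hs, hk1, hp⟩ |
          ⟨p, hp, hpk, hund, hsol, hinfo⟩
        · exact Or.inl ⟨Or.inl rfl, hin hs fun hk1 hd => by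
            have := G.not_of_dashed hd
            rcases hp hk1 with h | h <;> simp_all⟩
        · exact Or.inl ⟨Or.inr rfl, hin hs fun hk1 hd => (G.not_of_dashed hd).1 hp⟩
        · exact Or.inr (Or.inl ⟨rfl, hmem hk1 hp⟩)
        · have hocc : ρ.colliderSectionOcc p k := ⟨hp, hpk, hk, hund, hsol, e⟩
          rcases hinfo with ⟨rfl, hs⟩ | ⟨rfl, hs, hno⟩ | ⟨rfl, hs⟩
          · exact absurd ⟨p, k, hocc, hpk, le_rfl⟩ hs
          · obtain ⟨m, hpm, hmk, hmZ⟩ := hsec p k hocc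
            rcases hmk.eq_or_lt with rfl | hmk
            · simp [show f m ∈ Z from hmZ]
            · exact absurd hmZ (hno m hpm hmk)
          · simp
      · have e' := G.not_of_dashed e
        have hs : ¬ ρ.inColliderSectionAt k := fun hs => e'.2.2.2.2 (hsection_dir k e'.1 hs)
        have hs' : ¬ ρ.inColliderSectionAt (k + 1) := fun hs =>
          e'.2.2.2.1 (hsection_start k e'.1 hs)
        have hc : f k ∉ Z := hin hs (by simp [e'])
        exact ⟨.dashed, ha.step (.dashedOut (hpass hs) hc e),
          Or.inr (Or.inr (Or.inl ⟨rfl, hs', by omega, e⟩))⟩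
      · have e' := G.not_of_dashed e
        have hs : ¬ ρ.inColliderSectionAt k := fun hs => e'.2.2.2.1 (hsection_dir k e'.2.1 hs)
        have hs' : ¬ ρ.inColliderSectionAt (k + 1) := fun hs =>
          e'.2.2.2.2 (hsection_start k e'.2.1 hs)
        simp only [e, e', and_true, and_false, false_or] at hin hmem
        refine ⟨.tail, ha.step (.dashedIn e ?_), Or.inl ⟨rfl, hs', fun _ => Or.inr e⟩⟩
        rcases hinfo with ⟨rfl, -, hp⟩ | ⟨rfl, -, hk1, hp⟩ | ⟨rfl, -, hk1, hp⟩ |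
          ⟨p, hp, hpk, hund, hsol, hinfo⟩
        · refine Or.inl ⟨rfl, hin hs fun hk1 hd => ?_⟩
          rcases hp hk1 with h | h
          · have h' := G.not_of_solid h
            rcases hd with hd | hd | hd
            exacts [h'.2.2.2.2 hd, h'.2.1 hd, h'.2.2.1 hd]
          · have h' := G.not_of_dashed h
            rcases hd with hd | hd | hd
            exacts [h'.2.2.1 hd, h'.2.1 hd, h'.2.2.2.2 hd]
        · exact Or.inr ⟨by simp, hmem hk1 (Or.inr (Or.inl hp))⟩
        · exact Or.inr ⟨by simp, hmem hk1 (Or.inl hp)⟩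
        · rcases hinfo with ⟨rfl, -⟩ | ⟨-, h, -⟩ | ⟨-, h⟩
          · obtain ⟨hk1, hd⟩ := hprev p hp hpk hund hsol
            exact Or.inr ⟨by simp, hmem hk1 (Or.inr hd.symm)⟩
          · exact absurd h hs
          · exact absurd h hs
  obtain ⟨a, ha, hinfo⟩ := hmain n le_rfl
  refine ⟨a, ?_, ha⟩
  have hlast : ¬ ρ.inColliderSectionAt n := by
    rintro ⟨p, q, hocc, hp, hq⟩
    have : q + 1 ≤ n := hocc.2.2.1
    omega
  rcases hinfo with ⟨rfl, -⟩ | ⟨rfl, -⟩ | ⟨rfl, -⟩ | ⟨p, -, -, -, -, ⟨rfl, -⟩ | ⟨-, h, -⟩ | ⟨-, h⟩⟩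
  all_goals first
    | exact absurd h hlast
    | simp [Arrival.Passive]

/-- The route traversed backwards. -/
def _root_.PreGraph.Route.reverse {H : PreGraph V} (ρ : H.Route) : H.Route where
  len := ρ.len
  nodes k := ρ.nodes (ρ.len - k)
  adj_step k hk := by
    have h := ρ.adj_step (ρ.len - (k + 1)) (by omega)
    rw [show ρ.len - (k + 1) + 1 = ρ.len - k by omega] at h
    unfold PreGraph.adj at h ⊢
    rw [und_comm]
    tauto

section Reverse

variable {H : PreGraph V} {ρ : H.Route} {k p q : ℕ}

theorem _root_.PreGraph.Route.reverse_reverse_nodes (hk : k ≤ ρ.len) :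
    ρ.reverse.reverse.nodes k = ρ.nodes k := by
  change ρ.nodes (ρ.len - (ρ.len - k)) = ρ.nodes k
  rw [Nat.sub_sub_self hk]

theorem _root_.PreGraph.Route.colliderNodeAt_reverse (hk : k ≤ ρ.len) :
    ρ.reverse.colliderNodeAt k ↔ ρ.colliderNodeAt (ρ.len - k) := by
  unfold Route.colliderNodeAt
  change (1 ≤ k ∧ k < ρ.len ∧ H.colliderTriple (ρ.nodes (ρ.len - (k - 1))) (ρ.nodes (ρ.len - k))
    (ρ.nodes (ρ.len - (k + 1)))) ↔ _
  rw [colliderTriple_comm, ← and_assoc, ← and_assoc,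
    show (1 ≤ k ∧ k < ρ.len) ↔ (1 ≤ ρ.len - k ∧ ρ.len - k < ρ.len) by omega, and_congr_right_iff]
  intro h
  rw [show ρ.len - (k - 1) = ρ.len - k + 1 by omega, Nat.sub_sub]

theorem _root_.PreGraph.Route.colliderSectionOcc.of_reverse
    (h : ρ.reverse.colliderSectionOcc p q) :
    ρ.colliderSectionOcc (ρ.len - q) (ρ.len - p) := by
  obtain ⟨hp, hpq, hq, hund, hin, hout⟩ := h
  change q + 1 ≤ ρ.len at hq
  change ∀ m, p ≤ m → m < q → H.und (ρ.nodes (ρ.len - m)) (ρ.nodes (ρ.len - (m + 1))) at hund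
  refine ⟨by omega, by omega, by omega, fun m hm hmq => ?_, ?_, ?_⟩
  · have := hund (ρ.len - (m + 1)) (by omega) (by omega)
    rw [und_comm]
    rwa [show ρ.len - (ρ.len - (m + 1)) = m + 1 by omega,
      show ρ.len - (ρ.len - (m + 1) + 1) = m by omega] at this
  · rw [Nat.sub_sub]
    exact hout
  · rw [show ρ.len - p + 1 = ρ.len - (p - 1) by omega]
    exact hin

theorem _root_.PreGraph.Route.colliderSectionOcc.reverse (h : ρ.colliderSectionOcc p q) :
    ρ.reverse.colliderSectionOcc (ρ.len - q) (ρ.len - p) := by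
  obtain ⟨hp, hpq, hq, hund, hin, hout⟩ := h
  refine Route.colliderSectionOcc.of_reverse (ρ := ρ.reverse) ⟨hp, hpq, hq, fun m hm hmq => ?_,
    ?_, ?_⟩
  · rw [Route.reverse_reverse_nodes (by omega), Route.reverse_reverse_nodes (by omega)]
    exact hund m hm hmq
  · rw [Route.reverse_reverse_nodes (by omega), Route.reverse_reverse_nodes (by omega)]
    exact hin
  · rw [Route.reverse_reverse_nodes (by omega), Route.reverse_reverse_nodes (by omega)]
    exact hout

theorem _root_.PreGraph.Route.IsZOpen.reverse (h : ρ.IsZOpen Z) : ρ.reverse.IsZOpen Z := by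
  refine ⟨fun k hk => ?_, fun p q hpq => ?_, fun k hk hcol hsec => ?_⟩
  · exact h.1 _ ((Route.colliderNodeAt_reverse (ρ := ρ) hk.2.1.le).1 hk)
  · obtain ⟨m, hm₁, hm₂, hm⟩ := h.2.1 _ _ hpq.of_reverse
    have hq : q + 1 ≤ ρ.len := hpq.2.2.1
    have := hpq.2.1
    refine ⟨ρ.len - m, by omega, by omega, ?_⟩
    change ρ.nodes (ρ.len - (ρ.len - m)) ∈ Z
    rwa [Nat.sub_sub_self (by omega)]
  · refine h.2.2 _ (Nat.sub_le _ _)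
      (fun hc => hcol ((Route.colliderNodeAt_reverse (ρ := ρ) hk).2 hc)) ?_
    rintro ⟨p, q, hocc, hp, hq⟩
    have : k ≤ ρ.len := hk
    have := hocc.2.2.1
    exact hsec ⟨_, _, hocc.reverse, by omega, by omega⟩

end Reverse

theorem sep_iff {Y : Finset V} : G.Sep X Y Z ↔
    ∀ a c, OpenReach G.toPreGraph X Z a c → a.Passive → c ∉ Z → c ∉ Y := by
  constructor
  · intro h a c hac ha hcZ hcY
    obtain ⟨s, f, n, hrun, rfl, rfl⟩ := hac.exists_run
    exact h ⟨_, Or.inl ⟨hrun.start_mem, hcY⟩, hrun.isZOpen ha hcZ⟩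
  · have key : (∀ a c, OpenReach G.toPreGraph X Z a c → a.Passive → c ∉ Z → c ∉ Y) →
        ∀ ρ : G.toPreGraph.Route, ρ.nodes 0 ∈ X → ρ.nodes ρ.len ∈ Y → ¬ ρ.IsZOpen Z := by
      intro h ρ h0 hn hopen
      obtain ⟨a, ha, hac⟩ := hopen.exists_openReach h0
      refine h a _ hac ha (hopen.2.2 _ le_rfl (fun h => lt_irrefl _ h.2.1) ?_) hn
      rintro ⟨p, q, hocc, hp, hq⟩
      have := hocc.2.2.1
      omega
    rintro h ⟨ρ, ⟨h0, hn⟩ | ⟨h0, hn⟩, hopen⟩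
    · exact key h ρ h0 hn hopen
    · refine key h ρ.reverse ?_ ?_ hopen.reverse
      · exact hn
      · change ρ.nodes (ρ.len - ρ.len) ∈ Y
        rwa [Nat.sub_self]

end ChainGraph

namespace ChainGraph

open PreGraph

section LocalOfGlobal

variable {G : ChainGraph V} {Z : Finset V}

/-- If `Z` contains the relevant parents of `i` and of the nodes satisfying `N`, the `Z`-open
routes from `i` only lead to `i`, to nodes satisfying `N`, to `Z` and to descendants of `i`. -/
theorem openReach_singleton {i : V} {N : V → Prop}
    (hdesc : ∀ c, G.descends i c → c ∉ Z)
    (hpa : ∀ d, G.solid d i ∨ G.dashed d i → d ∈ Z)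
    (hN₀ : ∀ d, G.und i d → N d)
    (hNi : ∀ c, N c → G.uconn i c)
    (hN : ∀ c, N c → c ∉ Z → (∀ d, G.und c d → N d) ∧ ∀ d, G.solid d c → d ∈ Z)
    (hN' : ∀ c, N c → c ∈ Z → ∀ d, G.dashed d c → d ∈ Z)
    {a : Arrival} {c : V} (h : OpenReach G.toPreGraph {i} Z a c) :
    a = .tail ∧ c = i ∨ a = .undirected ∧ N c ∨ a = .tail ∧ c ∈ Z ∨
      (a = .dashed ∨ a = .solidOut ∨ a = .solidIn) ∧ G.descends i c := by
  induction h with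
  | start hx => exact Or.inl ⟨rfl, Finset.mem_singleton.1 hx⟩
  | @step a b c d _ hs ih =>
    rcases ih with ⟨rfl, rfl⟩ | ⟨rfl, hc⟩ | ⟨rfl, hc⟩ | ⟨ha, hc⟩
    · have hdir : ∀ d, G.solid c d ∨ G.dashed c d → G.descends c d :=
        fun d h => descends_of_directed h
      cases hs <;> simp_all [Arrival.Loose]
    · have hdir : ∀ d, G.solid c d ∨ G.dashed c d → G.descends i d :=
        fun d h => (descends_of_directed h).reach_left (uconn_reach (hNi c hc))
      have h₁ := hN c hc
      have h₂ := hN' c hc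
      cases hs <;> simp_all [Arrival.Loose]
    · cases hs <;> simp_all [Arrival.Loose]
    · have hfwd : ∀ d, G.fwd c d → G.descends i d := fun d h => hc.reach_right (.single h)
      have hcZ := hdesc c hc
      cases hs with
      | solidOut _ _ h hb => simp [hfwd d (Or.inr (Or.inl h)), hb]
      | dashedOut _ _ h => simp [hfwd d (Or.inr (Or.inr h))]
      | und h hab =>
        have := hfwd d (Or.inl h)
        rcases ha with rfl | rfl | rfl <;> simp_all [Arrival.Loose]
      | solidIn h h' => rcases ha with rfl | rfl | rfl <;> simp_all [Arrival.Loose]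
      | dashedIn h h' => rcases ha with rfl | rfl | rfl <;> simp_all

variable [Fintype V] [DecidableEq V]

theorem localMP_of_globalMP {I : Finset V → Finset V → Finset V → Prop}
    (h : G.globalMP I) : G.localMP I := by
  intro K hK i hi
  obtain rfl := eq_cc_of_mem_ccs hK hi
  refine ⟨h _ _ _ ⟨?_, ?_, ?_⟩ ?_, h _ _ _ ⟨?_, ?_, ?_⟩ ?_⟩
  · simp [self_mem_cc]
  · simp only [Finset.disjoint_singleton_left, Finset.mem_union, mem_fa, mem_mo_singleton, mem_cc,
      not_or, not_exists, not_and]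
    exact ⟨fun a ha hia => G.not_uconn_of_directed (Or.inl hia) (uconn_symm ha) .refl,
      G.dashed_irrefl i⟩
  · rw [Finset.disjoint_left]
    grind
  · rw [sep_iff]
    intro a c hac ha hcZ
    have hZK : ∀ d, G.uconn i d → d ∉ G.fa (G.cc i) ∪ G.mo {i} := by
      intro d hd
      simp only [Finset.mem_union, mem_fa, mem_mo_singleton, mem_cc, not_or, not_exists, not_and]
      exact ⟨fun a ha hda => G.not_uconn_of_directed (Or.inl hda) (uconn_symm ha) hd,
        fun hda => G.not_uconn_of_directed (Or.inr hda) .refl hd⟩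
    have hdesc : ∀ c, G.descends i c → c ∉ G.fa (G.cc i) ∪ G.mo {i} := by
      intro c hc hcZ
      simp only [Finset.mem_union, mem_fa, mem_mo_singleton, mem_cc] at hcZ
      rcases hcZ with ⟨k, hk, hck⟩ | hci
      · exact G.not_descends_of_directed (Or.inl hck) (uconn_symm hk) hc
      · exact G.not_descends_of_directed (Or.inr hci) .refl hc
    have hpa : ∀ d, G.solid d i ∨ G.dashed d i → d ∈ G.fa (G.cc i) ∪ G.mo {i} := by
      simp only [Finset.mem_union, mem_fa, mem_mo_singleton, mem_cc]
      exact fun d hd => hd.imp (fun h => ⟨i, .refl, h⟩) id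
    have hN : ∀ c, G.uconn i c → ∀ d, G.solid d c → d ∈ G.fa (G.cc i) ∪ G.mo {i} := by
      intro c hc d hd
      simp only [Finset.mem_union, mem_fa, mem_cc]
      exact Or.inl ⟨c, hc, hd⟩
    rcases openReach_singleton hdesc hpa (fun d hd => .single hd) (fun c hc => hc)
        (fun c hc _ => ⟨fun d hd => hc.tail hd, hN c hc⟩)
        (fun c hc hcZ => absurd hcZ (hZK c hc)) hac with
      ⟨-, rfl⟩ | ⟨-, hc⟩ | ⟨-, hc⟩ | ⟨-, hc⟩
    · simp [self_mem_cc]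
    · simp [mem_cc, hc]
    · exact absurd hc hcZ
    · simp [mem_nd_singleton, hc]
  · simp
  · simp only [Finset.disjoint_singleton_left, Finset.mem_union, pa, mem_fa_singleton, mem_mo,
      mem_nb_singleton, not_or, not_exists, not_and]
    refine ⟨⟨⟨G.solid_irrefl i, by simp [G.dashed_irrefl i]⟩, ?_⟩, fun a ha hia =>
      (G.not_directed_of_und ha).2.2.2 hia⟩
    rintro (h | h) <;> exact G.undir_irrefl i h
  · rw [Finset.disjoint_left]
    grind
  · rw [sep_iff]
    intro a c hac ha hcZ
    have hmem : ∀ d, d ∈ G.pa {i} ∪ G.nb {i} ∪ G.mo (G.nb {i}) ↔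
        ((G.solid d i ∨ G.dashed d i) ∨ G.und d i) ∨ ∃ a, G.und a i ∧ G.dashed d a := by
      simp only [Finset.mem_union, pa, mem_fa_singleton, mem_mo,
        mem_nb_singleton, Finset.mem_singleton, exists_eq_left, implies_true]
    have hdesc : ∀ c, G.descends i c → c ∉ G.pa {i} ∪ G.nb {i} ∪ G.mo (G.nb {i}) := by
      intro c hc hcZ
      rcases (hmem c).1 hcZ with (h | h) | ⟨k, hk, h⟩
      · exact G.not_descends_of_directed h .refl hc
      · exact G.not_descends_of_uconn (.single (und_comm.1 h)) hc
      · exact G.not_descends_of_directed (Or.inr h) (.single hk) hc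
    have hnb : ∀ c, G.und i c → c ∈ G.pa {i} ∪ G.nb {i} ∪ G.mo (G.nb {i}) := fun c hc =>
      (hmem c).2 (Or.inl (Or.inr (und_comm.1 hc)))
    rcases openReach_singleton (N := G.und i) hdesc
        (fun d hd => (hmem d).2 (Or.inl (Or.inl hd))) (fun d hd => hd) (fun c hc => .single hc)
        (fun c hc hcZ => absurd (hnb c hc) hcZ)
        (fun c hc _ d hd => (hmem d).2 (Or.inr ⟨c, und_comm.1 hc, hd⟩)) hac with
      ⟨-, rfl⟩ | ⟨-, hc⟩ | ⟨-, hc⟩ | ⟨-, hc⟩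
    · simp
    · exact absurd (hnb c hc) hcZ
    · exact absurd hc hcZ
    · simp [mem_nd_singleton, hc]

end LocalOfGlobal

section Graphoid

variable [Fintype V] [DecidableEq V] {G : ChainGraph V} {S : Matrix V V ℝ}

theorem blockRecMP_of_localMP (hS : S.PosDef) (h : G.localMP (gaussCI S)) :
    G.blockRecMP (gaussCI S) := by
  intro K hK i hi
  obtain ⟨h₁, h₂⟩ := h K hK i hi
  obtain rfl := eq_cc_of_mem_ccs hK hi
  rw [nd_cc]
  have hacyc : ∀ j k, G.uconn i k → G.solid j k ∨ G.dashed j k →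
      ¬ G.descends i j ∧ ¬ G.uconn i j := fun j k hk hj =>
    ⟨G.not_descends_of_directed hj (uconn_symm hk), G.not_uconn_of_directed hj (uconn_symm hk)⟩
  have hmem : ∀ d, d ∈ G.pa {i} ∪ G.nb {i} ∪ G.mo (G.nb {i}) ↔
      ((G.solid d i ∨ G.dashed d i) ∨ G.und d i) ∨ ∃ a, G.und a i ∧ G.dashed d a := by
    simp only [Finset.mem_union, pa, mem_fa_singleton, mem_mo,
      mem_nb_singleton, Finset.mem_singleton, exists_eq_left, implies_true]
  have huniv : ∀ d, d ∉ G.nd {i} ∨ d = i ∨ d ∈ (G.pa {i} ∪ G.nb {i} ∪ G.mo (G.nb {i})) ∪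
      (((G.nd {i} \ {i}) \ G.pa {i}) \ G.nb {i}) \ G.mo (G.nb {i}) := by
    intro d
    simp only [Finset.mem_union, Finset.mem_sdiff, Finset.mem_singleton]
    tauto
  have hZmem : ∀ T : Finset V, (∀ d, G.solid d i ∨ G.dashed d i → d ∈ T) →
      (∀ d, G.und d i → d ∈ T) → (∀ a d, G.und a i → G.dashed d a → d ∈ T) →
      G.pa {i} ∪ G.nb {i} ∪ G.mo (G.nb {i}) ⊆ T := by
    intro T h₁ h₂ h₃ d hd
    rcases (hmem d).1 hd with (h | h) | ⟨a, ha, h⟩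
    exacts [h₁ d h, h₂ d h, h₃ a d ha h]
  have hund : ∀ d, G.und d i → d ≠ i := by
    rintro d hd rfl
    rcases hd with h | h <;> exact G.undir_irrefl d h
  have hsub : ∀ T : Finset V, (∀ d ∈ T, ¬ G.descends i d ∧ d ≠ i) →
      T ⊆ (G.pa {i} ∪ G.nb {i} ∪ G.mo (G.nb {i})) ∪
        (((G.nd {i} \ {i}) \ G.pa {i}) \ G.nb {i}) \ G.mo (G.nb {i}) := by
    intro T hT d hd
    obtain ⟨h, h'⟩ := hT d hd
    exact ((huniv d).resolve_left (by simp [mem_nd_singleton, h])).resolve_left h'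
  have hK' : ∀ d, G.uconn i d → ¬ G.descends i d := fun d => G.not_descends_of_uconn
  refine ⟨h₁, gaussCI_weakUnion hS h₂ ?_ ?_ ?_, fun j hj hji hjn =>
    gaussCI_weakUnion hS h₂ ?_ ?_ ?_⟩
  · refine hZmem _ ?_ ?_ ?_
    · rintro d (hd | hd)
      · simp [mem_fa_singleton, hd]
      · simp only [Finset.mem_union, mem_mo]
        exact Or.inr ⟨i, hi, hd⟩
    · intro d hd
      simp only [Finset.mem_union, Finset.mem_sdiff, mem_cc, Finset.mem_singleton]
      exact Or.inl (Or.inl ⟨.single (und_comm.1 hd), hund d hd⟩)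
    · intro a d ha hd
      simp only [Finset.mem_union, mem_mo, mem_cc]
      exact Or.inr ⟨a, .single (und_comm.1 ha), hd⟩
  · refine hsub _ fun d hd => ?_
    simp only [Finset.mem_union, Finset.mem_sdiff, mem_cc, Finset.mem_singleton, mem_fa_singleton,
      mem_mo] at hd
    rcases hd with (⟨hd, hdi⟩ | hd) | ⟨k, hk, hd⟩
    · exact ⟨hK' d hd, hdi⟩
    · obtain ⟨h, h'⟩ := hacyc d i .refl (Or.inl hd)
      exact ⟨h, fun e => h' (e ▸ .refl)⟩
    · obtain ⟨h, h'⟩ := hacyc d k hk (Or.inr hd)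
      exact ⟨h, fun e => h' (e ▸ .refl)⟩
  · refine hsub _ fun d hd => ?_
    simp only [Finset.mem_sdiff, mem_nd_singleton, mem_cc] at hd
    exact ⟨hd.1.1.1, fun e => hd.1.1.2 (e ▸ .refl)⟩
  · rw [mem_nb_singleton] at hjn
    refine hZmem _ ?_ ?_ ?_
    · intro d hd
      simp only [Finset.mem_union, pa, mem_fa, mem_mo]
      exact Or.inr (hd.imp (fun h => ⟨i, hi, h⟩) fun h => ⟨i, hi, h⟩)
    · intro d hd
      simp only [Finset.mem_union, Finset.mem_sdiff, mem_cc, Finset.mem_singleton,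
        Finset.mem_insert, not_or]
      exact Or.inl ⟨.single (und_comm.1 hd), hund d hd, fun e => hjn (e ▸ hd)⟩
    · intro a d ha hd
      simp only [Finset.mem_union, pa, mem_mo, mem_cc]
      exact Or.inr (Or.inr ⟨a, .single (und_comm.1 ha), hd⟩)
  · refine hsub _ fun d hd => ?_
    simp only [Finset.mem_union, Finset.mem_sdiff, mem_cc, Finset.mem_singleton, pa, mem_fa,
      mem_mo, Finset.mem_insert, not_or] at hd
    rcases hd with ⟨hd, hdi, -⟩ | ⟨k, hk, hd⟩ | ⟨k, hk, hd⟩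
    · exact ⟨hK' d hd, hdi⟩
    · obtain ⟨h, h'⟩ := hacyc d k hk (Or.inl hd)
      exact ⟨h, fun e => h' (e ▸ .refl)⟩
    · obtain ⟨h, h'⟩ := hacyc d k hk (Or.inr hd)
      exact ⟨h, fun e => h' (e ▸ .refl)⟩
  · refine hsub _ fun d hd => ?_
    obtain rfl := Finset.mem_singleton.1 hd
    exact ⟨hK' d (mem_cc.1 hj), hji⟩

theorem pairwiseMP_of_blockRecMP (hS : S.PosDef) (h : G.blockRecMP (gaussCI S)) :
    G.pairwiseMP (gaussCI S) := by
  intro i j hij hadj K hK hi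
  obtain ⟨h₁, h₂, h₃⟩ := h K hK i hi
  obtain rfl := eq_cc_of_mem_ccs hK hi
  rw [nd_cc] at h₁ h₂
  have hacyc : ∀ d k, G.uconn i k → G.solid d k ∨ G.dashed d k →
      ¬ G.descends i d ∧ ¬ G.uconn i d := fun d k hk hd =>
    ⟨G.not_descends_of_directed hd (uconn_symm hk), G.not_uconn_of_directed hd (uconn_symm hk)⟩
  have hfa : ∀ d ∈ G.fa (G.cc i), ¬ G.descends i d ∧ ¬ G.uconn i d := fun d hd => by
    obtain ⟨k, hk, hd⟩ := mem_fa.1 hd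
    exact hacyc d k (mem_cc.1 hk) (Or.inl hd)
  have hmo : ∀ d ∈ G.mo (G.cc i), ¬ G.descends i d ∧ ¬ G.uconn i d := fun d hd => by
    obtain ⟨k, hk, hd⟩ := mem_mo.1 hd
    exact hacyc d k (mem_cc.1 hk) (Or.inr hd)
  have hfai : ∀ d ∈ G.fa {i}, d ∈ G.fa (G.cc i) := fun d hd =>
    mem_fa.2 ⟨i, hi, mem_fa_singleton.1 hd⟩
  have hmoi : ∀ d ∈ G.mo {i}, d ∈ G.mo (G.cc i) := fun d hd =>
    mem_mo.2 ⟨i, hi, mem_mo_singleton.1 hd⟩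
  have hK' : ∀ d, G.uconn i d → ¬ G.descends i d := fun d => G.not_descends_of_uconn
  have hii : G.uconn i i := .refl
  refine ⟨fun hj => gaussCI_weakUnion hS h₁ ?_ ?_ ?_, fun hj => ?_⟩
  · intro d hd
    simp only [Finset.mem_sdiff, Finset.mem_union, Finset.mem_singleton, mem_nd_singleton,
      mem_cc] at hj hd ⊢
    have hd' : ¬ G.descends i d ∧ ¬ G.uconn i d :=
      hd.elim (hfa d) fun hd => hmo d (hmoi d hd)
    refine ⟨hd', ?_⟩
    rintro rfl
    tauto
  · intro d hd
    simp only [Finset.mem_sdiff, Finset.mem_union] at hd ⊢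
    tauto
  · rw [Finset.singleton_subset_iff]
    simp only [Finset.mem_sdiff, Finset.mem_union] at hj ⊢
    tauto
  · simp only [Finset.mem_sdiff, Finset.mem_singleton, mem_nd_singleton] at hj
    by_cases hjK : G.uconn i j
    · have hjn : j ∉ G.nb {i} := fun hn =>
        hadj (Or.inl (und_comm.1 (mem_nb_singleton.1 hn)))
      have h₃ := h₃ j (mem_cc.2 hjK) hij.symm hjn
      have h₂' : gaussCI S {i} (((G.nd {i} \ G.cc i) \ G.pa (G.cc i)))
          ((G.cc i \ {i}) ∪ G.pa (G.cc i)) := by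
        refine gaussCI_weakUnion hS h₂ ?_ ?_ ?_ <;>
          intro d hd <;> simp only [pa] at * <;> grind [mem_nd_singleton, mem_cc]
      have h₄ := gaussCI_contraction hS h₂' h₃ (by grind) (by grind)
      refine gaussCI_weakUnion hS h₄ ?_ ?_ ?_ <;>
        intro d hd <;> simp only [pa] at * <;> grind [mem_nd_singleton, mem_cc]
    · refine gaussCI_weakUnion hS h₂ ?_ ?_ ?_ <;>
        intro d hd <;> grind [mem_nd_singleton, mem_cc]

end Graphoid

end ChainGraph

section ZeroPattern

variable [Fintype V] [DecidableEq V]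

/-- A regression coefficient vanishes when the response is conditionally independent of the
regressor given the others. -/
theorem regression_eq_zero_of_gaussCI {S : Matrix V V ℝ} (hS : S.PosDef) {D : Finset V}
    {b : V → ℝ} {i j : V} (hb : ∀ v ∉ D, b v = 0) (hbS : ∀ w ∈ D, (b ᵥ* S) w = S i w)
    (h : gaussCI S {i} {j} (D \ {j})) : b j = 0 := by
  obtain ⟨c, hc, hcS, hcj⟩ := (gaussCI_iff_exists hS _ _ _).1 h i (Finset.mem_singleton_self i)
  have hcD : ∀ w ∈ D, (c ᵥ* S) w = S i w := fun w hw => by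
    by_cases hwj : w = j
    · exact hcj w (by simp [hwj])
    · exact hcS w (by simp [hw, hwj])
  have hbc : b - c = 0 := hS.eq_zero_of_vecMul_eq_zero_on fun w hw => by
    have hwD : w ∈ D := by
      by_contra hn
      exact hw (by simp [hb w hn, hc w (by simp [hn])])
    rw [sub_vecMul, Pi.sub_apply, hbS w hwD, hcD w hwD, sub_self]
  rw [sub_eq_zero.1 hbc]
  exact hc j (by simp)

/-- An entry of a row of the precision matrix of a marginal vanishes under the corresponding
conditional independence. -/
theorem precision_eq_zero_of_gaussCI {S : Matrix V V ℝ} (hS : S.PosDef) {D : Finset V}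
    {q : V → ℝ} {i j : V} (hij : i ≠ j) (hi : i ∈ D) (hq : ∀ v ∉ D, q v = 0)
    (hqS : ∀ w ∈ D, (q ᵥ* S) w = if w = i then 1 else 0)
    (h : gaussCI S {i} {j} (D \ {i, j})) : q j = 0 := by
  obtain ⟨c, hc, hcS, hcj⟩ := (gaussCI_iff_exists hS _ _ _).1 h i (Finset.mem_singleton_self i)
  set g : V → ℝ := Pi.single i 1 - c with hg
  have hgS : ∀ w, (g ᵥ* S) w = S i w - (c ᵥ* S) w := fun w => by
    rw [hg, sub_vecMul, single_one_vecMul]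
    rfl
  have hzero : g - (g ᵥ* S) i • q = 0 := hS.eq_zero_of_vecMul_eq_zero_on fun w hw => by
    have hwD : w ∈ D := by
      by_contra hn
      refine hw ?_
      have hwi : w ≠ i := fun e => hn (e ▸ hi)
      simp [hg, hq w hn, hc w (by simp [hn]), hwi]
    rw [sub_vecMul, smul_vecMul, Pi.sub_apply, Pi.smul_apply, hqS w hwD]
    by_cases hwi : w = i
    · simp [hwi]
    · have : (c ᵥ* S) w = S i w := by
        by_cases hwj : w = j
        · exact hcj w (by simp [hwj])
        · exact hcS w (by simp [hwD, hwi, hwj])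
      simp [hgS w, this, hwi]
  have hgq := sub_eq_zero.1 hzero
  have h₁ := congrFun hgq i
  have h₂ := congrFun hgq j
  simp only [hg, Pi.sub_apply, Pi.single_eq_same, hc i (by simp), Pi.smul_apply, smul_eq_mul] at h₁
  simp only [hg, Pi.sub_apply, Pi.single_eq_of_ne hij.symm, hc j (by simp), Pi.smul_apply,
    smul_eq_mul, sub_self] at h₂
  refine (mul_eq_zero.1 h₂.symm).resolve_left fun h0 => ?_
  rw [h0] at h₁
  simp at h₁

theorem isUnit_det_one_sub_of_wellFounded {β : Matrix V V ℝ} {r : V → V → Prop}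
    (hr : WellFounded r) (hβ : ∀ i j, β i j ≠ 0 → r i j) : IsUnit (1 - β).det := by
  rw [isUnit_iff_ne_zero]
  intro hdet
  obtain ⟨a, ha, hmul⟩ := Matrix.exists_vecMul_eq_zero_iff.2 hdet
  obtain ⟨i, hi, hmin⟩ := hr.has_min {i | a i ≠ 0} (Function.ne_iff.1 ha)
  refine hi ?_
  have h := congrFun hmul i
  rw [vecMul_sub, vecMul_one, Pi.sub_apply, Pi.zero_apply, sub_eq_zero] at h
  rw [h]
  refine Finset.sum_eq_zero fun j _ => ?_
  by_cases hj : a j = 0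
  · simp [hj]
  · have : β j i = 0 := by
      by_contra hne
      exact hmin j hj (hβ j i hne)
    simp [this]

/-- A left inverse of a block diagonal matrix is block diagonal. -/
theorem eq_zero_of_mul_eq_one_of_block {P L : Matrix V V ℝ} {r : V → V → Prop}
    (hr : Equivalence r) (hPL : P * L = 1) (hL : ∀ i j, ¬ r i j → L i j = 0) {i j : V}
    (hij : ¬ r i j) : P i j = 0 := by
  let P' : Matrix V V ℝ := Matrix.of fun i j => if r i j then P i j else 0
  have hP'L : P' * L = 1 := by
    ext i j
    rw [Matrix.mul_apply]
    by_cases hij : r i j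
    · rw [← hPL, Matrix.mul_apply]
      refine Finset.sum_congr rfl fun k _ => ?_
      by_cases hik : r i k
      · simp [P', hik]
      · rw [hL k j fun hkj => hik (hr.trans hij (hr.symm hkj))]
        simp
    · rw [Matrix.one_apply_ne fun e : i = j => hij (e ▸ hr.refl i)]
      refine Finset.sum_eq_zero fun k _ => ?_
      by_cases hik : r i k
      · rw [hL k j fun hkj => hij (hr.trans hik hkj), mul_zero]
      · simp [P', hik]
  have : P = P' := (Matrix.inv_eq_left_inv hPL).symm.trans (Matrix.inv_eq_left_inv hP'L)
  rw [this]
  simp [P', hij]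

end ZeroPattern

namespace PreGraph

/-- The linear structural equations with coefficient matrices `B` (dashed edges) and `C` (solid
edges), error covariance `L` and error precision `P`, all respecting the graph, induce the
covariance matrix `S`. -/
structure IsStructural [Fintype V] [DecidableEq V] (G : PreGraph V)
    (B C P L S : Matrix V V ℝ) : Prop where
  dashed_of_ne : ∀ i j, B i j ≠ 0 → G.dashed j i
  solid_of_ne : ∀ i j, C i j ≠ 0 → G.solid j i
  und_of_ne : ∀ i j, P i j ≠ 0 → i = j ∨ G.und i j
  uconn_of_ne : ∀ i j, L i j ≠ 0 → G.uconn i j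
  mul_eq_one : P * L = 1
  cov : (1 - B - L * C) * S * (1 - B - L * C)ᵀ = L

theorem uconn_equivalence {G : PreGraph V} : Equivalence G.uconn :=
  ⟨fun _ => .refl, uconn_symm, Relation.ReflTransGen.trans⟩

end PreGraph

namespace ChainGraph

open PreGraph

variable [Fintype V]

theorem wellFounded_descends (G : ChainGraph V) :
    WellFounded fun i j => G.descends j i := by
  have : IsTrans V fun i j => G.descends j i :=
    ⟨fun _ _ _ h₁ h₂ => h₂.reach_right h₁.reach⟩
  have : Std.Irrefl fun i j : V => G.descends j i :=
    ⟨fun _ h => G.not_reach_of_descends h .refl⟩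
  exact Finite.wellFounded_of_trans_of_irrefl _

variable [DecidableEq V] {G : ChainGraph V} {S : Matrix V V ℝ}

theorem exists_isStructural (hG : G.IsUCG) (hS : S.PosDef) (h : G.pairwiseMP (gaussCI S)) :
    ∃ B C P L, G.IsStructural B C P L S := by
  choose β hβ₀ hβS using fun i => hS.exists_vecMul_eq_on (G.nd {i} \ G.cc i) (S i)
  have hmemD : ∀ i j, j ∈ G.nd {i} \ G.cc i ↔ ¬ G.descends i j ∧ ¬ G.uconn i j := fun i j => by
    rw [Finset.mem_sdiff, mem_nd_singleton, mem_cc]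
  have hD : ∀ i j, G.uconn i j → G.nd {i} \ G.cc i = G.nd {j} \ G.cc j := fun i j hij => by
    rw [← nd_cc, ← nd_cc, cc_eq_of_uconn hij]
  have hβD : ∀ i j, β i j ≠ 0 → ¬ G.descends i j ∧ ¬ G.uconn i j := fun i j hne => by
    rw [← hmemD]
    by_contra hn
    exact hne (hβ₀ i j hn)
  have hβ : ∀ i j, β i j ≠ 0 → (∃ k, G.uconn i k ∧ G.solid j k) ∨ G.dashed j i := by
    intro i j hne
    by_contra hn
    rw [not_or] at hn
    obtain ⟨hdesc, hu⟩ := hβD i j hne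
    have hij : i ≠ j := fun e => hu (e ▸ .refl)
    refine hne (regression_eq_zero_of_gaussCI hS (hβ₀ i) (hβS i)
      ((h i j hij ?_ _ (cc_mem_ccs i) (self_mem_cc i)).1 ?_))
    · rintro (h | h | h | h | h)
      · exact hu (.single h)
      · exact hdesc (descends_of_directed (Or.inl h))
      · exact hn.1 ⟨i, .refl, h⟩
      · exact hdesc (descends_of_directed (Or.inr h))
      · exact hn.2 h
    · simpa [mem_nd_singleton, mem_cc, mem_fa, mem_mo_singleton, hdesc, hu, hn.2] using hn.1
  have hβdesc : ∀ i j, β i j ≠ 0 → G.descends j i := by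
    intro i j hne
    rcases hβ i j hne with ⟨k, hk, hjk⟩ | hji
    · exact (descends_of_directed (Or.inl hjk)).reach_right (uconn_reach (uconn_symm hk))
    · exact descends_of_directed (Or.inr hji)
  let T : Matrix V V ℝ := 1 - Matrix.of β
  have hTdet : IsUnit T.det := isUnit_det_one_sub_of_wellFounded G.wellFounded_descends hβdesc
  have hT : ∀ i j, T i j ≠ 0 → i = j ∨ β i j ≠ 0 := fun i j hne => by
    by_contra hn
    rw [not_or, not_not] at hn
    exact hne (by simp [T, hn.1, hn.2])
  have hTS : ∀ i, ∀ j ∈ G.nd {i} \ G.cc i, (T * S) i j = 0 := fun i j hj => by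
    have : (T * S) i j = S i j - (β i ᵥ* S) j := by
      rw [Matrix.sub_mul, Matrix.one_mul, Matrix.sub_apply, Matrix.mul_apply_eq_vecMul]
      rfl
    rw [this, hβS i j hj, sub_self]
  let L : Matrix V V ℝ := T * S * Tᵀ
  have hL : ∀ i j, L i j = ∑ k, (T * S) i k * T j k := fun i j => Matrix.mul_apply
  have hLsymm : ∀ i j, L i j = L j i := fun i j => by
    have hSt : Sᵀ = S := (show S.IsSymm by simpa using hS.isHermitian).eq
    have : Lᵀ = L := by simp [L, Matrix.transpose_mul, hSt, Matrix.mul_assoc]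
    rw [← this, Matrix.transpose_apply, this]
  have hLdet : IsUnit L.det := by
    simp only [L, Matrix.det_mul, Matrix.det_transpose]
    exact (hTdet.mul ((Matrix.isUnit_iff_isUnit_det _).1 hS.isUnit)).mul hTdet
  have hLnd : ∀ i j, ¬ G.uconn i j → ¬ G.descends i j → L i j = 0 := by
    intro i j hu hd
    rw [hL]
    refine Finset.sum_eq_zero fun k _ => ?_
    by_cases hk : T j k = 0
    · rw [hk, mul_zero]
    · rw [hTS i k ((hmemD i k).2 ?_), zero_mul]
      rcases hT j k hk with rfl | hjk
      · exact ⟨hd, hu⟩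
      · have hkj := hβdesc j k hjk
        exact ⟨fun h => hd (h.reach_right hkj.reach), fun h => hd (hkj.reach_left (uconn_reach h))⟩
  have hLu : ∀ i j, ¬ G.uconn i j → L i j = 0 := by
    intro i j hu
    by_cases hd : G.descends i j
    · rw [hLsymm]
      exact hLnd j i (fun h => hu (uconn_symm h)) fun h => G.not_reach_of_descends hd h.reach
    · exact hLnd i j hu hd
  let P : Matrix V V ℝ := L⁻¹
  have hPL : P * L = 1 := Matrix.nonsing_inv_mul _ hLdet
  have hLP : L * P = 1 := Matrix.mul_nonsing_inv _ hLdet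
  have hPu : ∀ i j, ¬ G.uconn i j → P i j = 0 := fun i j =>
    eq_zero_of_mul_eq_one_of_block uconn_equivalence hPL hLu
  let Q : Matrix V V ℝ := P * T
  have hQ : ∀ i l, Q i l ≠ 0 → l ∈ G.nd {i} := by
    intro i l hne
    obtain ⟨k, -, hk⟩ := Finset.exists_ne_zero_of_sum_ne_zero (Matrix.mul_apply.symm.trans_ne hne)
    have hik : G.uconn i k := by
      by_contra hn
      exact hk (by rw [hPu i k hn, zero_mul])
    rcases hT k l (right_ne_zero_of_mul hk) with rfl | hkl
    · exact mem_nd_singleton.2 (G.not_descends_of_uconn hik)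
    · rw [← nd_cc, cc_eq_of_uconn hik, nd_cc, mem_nd_singleton]
      exact (hβD k l hkl).1
  have hTSL : ∀ k j, G.uconn k j → (T * S) k j = L k j := by
    intro k j hkj
    have : L k j = (T * S) k j - ∑ l, (T * S) k l * β j l := by
      simp [hL, T, mul_sub, Finset.sum_sub_distrib, Matrix.one_apply]
    rw [this, Finset.sum_eq_zero, sub_zero]
    intro l _
    by_cases hl : β j l = 0
    · rw [hl, mul_zero]
    · rw [hTS k l (by rw [hD k j hkj, hmemD]; exact hβD j l hl), zero_mul]
  have hQS : ∀ i, ∀ j ∈ G.nd {i}, (Q i ᵥ* S) j = if j = i then 1 else 0 := by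
    intro i j hj
    have hQS : (Q i ᵥ* S) j = ∑ k, P i k * (T * S) k j := by
      rw [← Matrix.mul_apply_eq_vecMul, Matrix.mul_assoc, Matrix.mul_apply]
    have h1 : (if j = i then (1 : ℝ) else 0) = ∑ k, P i k * L k j := by
      rw [← Matrix.mul_apply, hPL, Matrix.one_apply]
      simp only [eq_comm]
    rw [hQS, h1]
    refine Finset.sum_congr rfl fun k _ => ?_
    by_cases hik : G.uconn i k
    · by_cases hij : G.uconn i j
      · rw [hTSL k j ((uconn_symm hik).trans hij)]
      · rw [hLu k j fun h => hij (hik.trans h), hTS k j]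
        rw [← hD i k hik, hmemD]
        exact ⟨mem_nd_singleton.1 hj, hij⟩
    · rw [hPu i k hik, zero_mul, zero_mul]
  have hQ₀ : ∀ i j, i ≠ j → ¬ G.adj i j → ¬ G.descends i j → j ∉ G.mo (G.cc i) → Q i j = 0 := by
    intro i j hij hadj hd hmo
    have hii : ¬ G.descends i i := G.not_descends_of_uconn .refl
    refine precision_eq_zero_of_gaussCI hS hij (mem_nd_singleton.2 hii)
      (fun v hv => by_contra fun hne => hv (hQ i v hne)) (hQS i)
      ((h i j hij hadj _ (cc_mem_ccs i) (self_mem_cc i)).2 ?_)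
    simp only [Finset.mem_sdiff, mem_nd_singleton, Finset.mem_singleton, mem_fa_singleton]
    exact ⟨⟨⟨hd, hij.symm⟩, fun h => hadj (Or.inr (Or.inr (Or.inl h)))⟩, hmo⟩
  let W : Matrix V V ℝ := P * Matrix.of β
  have hQPW : ∀ i j, Q i j = P i j - W i j := fun i j => by
    simp only [Q, T, W, Matrix.mul_sub, Matrix.mul_one, Matrix.sub_apply]
  have hW : ∀ i j, G.uconn i j → W i j = 0 := fun i j hij => by
    refine Finset.sum_eq_zero fun k _ => ?_
    by_cases hk : β k j = 0
    · simp [hk]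
    · have : ¬ G.uconn i k := fun hik => (hβD k j hk).2 ((uconn_symm hik).trans hij)
      simp [hPu i k this]
  have hacyc : ∀ i j k, G.uconn i k → G.solid j k ∨ G.dashed j k →
      ¬ G.descends i j ∧ ¬ G.uconn i j := fun i j k hk hj =>
    ⟨G.not_descends_of_directed hj (uconn_symm hk), G.not_uconn_of_directed hj (uconn_symm hk)⟩
  let C : Matrix V V ℝ := Matrix.of fun i j => if j ∈ G.fa (G.cc i) then W i j else 0
  let B : Matrix V V ℝ := Matrix.of fun i j => if j ∈ G.fa (G.cc i) then 0 else β i j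
  have hBC : B + L * C = Matrix.of β := by
    ext i j
    have hLW : (L * W) i j = β i j := by
      simp only [W]
      rw [← Matrix.mul_assoc, hLP, Matrix.one_mul]
      rfl
    have hLC : (L * C) i j = if j ∈ G.fa (G.cc i) then (L * W) i j else 0 := by
      have hCk : ∀ k, L i k * C k j = if j ∈ G.fa (G.cc i) then L i k * W k j else 0 := by
        intro k
        by_cases hik : G.uconn i k
        · simp [C, cc_eq_of_uconn hik]
        · simp [hLu i k hik]
      simp only [Matrix.mul_apply, hCk]
      split_ifs <;> simp
    rw [Matrix.add_apply, hLC, hLW]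
    by_cases hj : j ∈ G.fa (G.cc i) <;> simp [B, hj]
  refine ⟨B, C, P, L, ⟨?_, ?_, ?_, ?_, hPL, ?_⟩⟩
  · intro i j hne
    by_cases hj : j ∈ G.fa (G.cc i)
    · simp [B, hj] at hne
    · refine (hβ i j (by simpa [B, hj] using hne)).resolve_left ?_
      rintro ⟨k, hk, hjk⟩
      exact hj (mem_fa.2 ⟨k, mem_cc.2 hk, hjk⟩)
  · intro i j hne
    by_cases hj : j ∈ G.fa (G.cc i)
    · by_contra hn
      refine hne ?_
      have hmo : j ∉ G.mo (G.cc i) := Finset.disjoint_left.1 (hG _ (cc_mem_ccs i)) hj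
      obtain ⟨k, hk, hjk⟩ := mem_fa.1 hj
      obtain ⟨hd, hu⟩ := hacyc i j k (mem_cc.1 hk) (Or.inl hjk)
      have hQij := hQ₀ i j (fun e => hu (e ▸ .refl)) ?_ hd hmo
      · rw [hQPW, hPu i j hu, zero_sub, neg_eq_zero] at hQij
        simp [C, hQij]
      · rintro (h | h | h | h | h)
        · exact hu (.single h)
        · exact hd (descends_of_directed (Or.inl h))
        · exact hn h
        · exact hd (descends_of_directed (Or.inr h))
        · exact hmo (mem_mo.2 ⟨i, self_mem_cc i, h⟩)
    · simp [C, hj] at hne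
  · intro i j hne
    by_contra hn
    rw [not_or] at hn
    have hij : G.uconn i j := by
      by_contra hu
      exact hne (hPu i j hu)
    have hmo : j ∉ G.mo (G.cc i) := fun hj => by
      obtain ⟨k, hk, hjk⟩ := mem_mo.1 hj
      exact (hacyc i j k (mem_cc.1 hk) (Or.inr hjk)).2 hij
    have hQij := hQ₀ i j hn.1 ?_ (G.not_descends_of_uconn hij) hmo
    · rw [hQPW, hW i j hij, sub_zero] at hQij
      exact hne hQij
    · rintro (h | h | h | h | h)
      · exact hn.2 h
      · exact G.not_descends_of_uconn hij (descends_of_directed (Or.inl h))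
      · exact G.not_descends_of_uconn (uconn_symm hij) (descends_of_directed (Or.inl h))
      · exact G.not_descends_of_uconn hij (descends_of_directed (Or.inr h))
      · exact G.not_descends_of_uconn (uconn_symm hij) (descends_of_directed (Or.inr h))
  · exact fun i j hne => by_contra fun hu => hne (hLu i j hu)
  · rw [sub_sub, hBC]

end ChainGraph

namespace PreGraph

/-- The nodes from which `U` can be reached along directed edges, where undirected edges may be
traversed in between provided the preceding directed edge is solid. -/
inductive Ancestral (G : PreGraph V) (U : Finset V) : V → Prop
  | base {u} (hu : u ∈ U) : Ancestral G U u
  | mother {m w} (hw : Ancestral G U w) (h : G.dashed m w) : Ancestral G U m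
  | father {f k w} (hw : Ancestral G U w) (hk : G.uconn k w) (h : G.solid f k) :
      Ancestral G U f

/-- The nodes in the chain components of the ancestral nodes. -/
def InAncestralComponent (G : PreGraph V) (U : Finset V) (v : V) : Prop :=
  ∃ w, G.Ancestral U w ∧ G.uconn v w

/-- `v` is `i` or a mother of the ancestral node `i`. -/
def SelfOrMother (G : PreGraph V) (U : Finset V) (v i : V) : Prop :=
  v = i ∨ G.Ancestral U i ∧ G.dashed v i

/-- The positions of the possibly nonzero entries of the precision matrix of a Gaussian
distribution that has the marginal of interest on the ancestral nodes. -/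
def PrecisionLink (G : PreGraph V) (U : Finset V) (v w : V) : Prop :=
  (∃ i j, G.SelfOrMother U v i ∧ (i = j ∨ G.und i j) ∧ G.SelfOrMother U w j) ∨
  (∃ i, G.SelfOrMother U v i ∧ G.InAncestralComponent U i ∧ G.solid w i) ∨
  (∃ i, G.InAncestralComponent U i ∧ G.solid v i ∧ G.SelfOrMother U w i) ∨
  (∃ i j, G.solid v i ∧ G.uconn i j ∧ G.InAncestralComponent U j ∧ G.solid w j)

section Separation

variable {G : PreGraph V} {X Y Z U : Finset V} {c d f v w : V} {a : Arrival}

/-- A node is reached in a section entered along a solid edge, whichever way it will be left. -/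
def SolidReach (G : PreGraph V) (X Z : Finset V) (c : V) : Prop :=
  G.OpenReach X Z .solidOut c ∧ G.OpenReach X Z .solidIn c

theorem OpenReach.solidReach (h : G.OpenReach X Z a c) (ha : a.Passive) (hc : c ∉ Z)
    (hcd : G.solid c d) : G.SolidReach X Z d :=
  ⟨h.step (.solidOut ha hc hcd (Or.inl rfl)), h.step (.solidOut ha hc hcd (Or.inr rfl))⟩

theorem SolidReach.und (h : G.SolidReach X Z c) (hc : c ∉ Z) (hcd : G.und c d) :
    G.SolidReach X Z d :=
  ⟨h.1.step (.und hcd (by simp [hc])), h.2.step (.und hcd (by simp [hc]))⟩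

theorem SolidReach.uconn (h : G.SolidReach X Z c) (hcd : G.uconn c d) :
    G.SolidReach X Z d ∨ G.OpenReach X Z .solidInHit d := by
  induction hcd with
  | refl => exact Or.inl h
  | @tail b d _ hbd ih =>
    rcases ih with ih | ih
    · by_cases hb : b ∈ Z
      · exact Or.inr (ih.2.step (.und hbd (by simp [hb])))
      · exact Or.inl (ih.und hb hbd)
    · exact Or.inr (ih.step (.und hbd (by simp)))

/-- If one can turn back at `w`, one can turn back at every node of its component. -/
theorem SolidReach.turn_of_uconn (h : G.SolidReach X Z c) (hcw : G.uconn c w)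
    (hw : ∀ a : Arrival, a.Passive → G.OpenReach X Z a w → w ∉ Z → G.OpenReach X Z .tail w) :
    c ∈ Z ∨ G.OpenReach X Z .solidInHit c ∨ ∃ a : Arrival, a.Loose ∧ G.OpenReach X Z a c := by
  induction hcw using Relation.ReflTransGen.head_induction_on with
  | refl =>
    by_cases hwZ : w ∈ Z
    · exact Or.inl hwZ
    · exact Or.inr (Or.inr ⟨_, Or.inl rfl, hw _ (by simp [Arrival.Passive]) h.1 hwZ⟩)
  | @head c d hcd _ ih =>
    by_cases hc : c ∈ Z
    · exact Or.inl hc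
    · have hd := h.und hc hcd
      have hdc := und_comm.1 hcd
      by_cases hdZ : d ∈ Z
      · exact Or.inr (Or.inl (hd.2.step (.und hdc (by simp [hdZ]))))
      · rcases (ih hd).resolve_left hdZ with hit | ⟨a, ha, hloose⟩
        · exact Or.inr (Or.inl (hit.step (.und hdc (by simp))))
        · exact Or.inr (Or.inr ⟨.undirected, Or.inr rfl,
            hloose.step (.und hdc (by simp [ha, hdZ]))⟩)

theorem SolidReach.turn_to_father (h : G.SolidReach X Z c) (hcw : G.uconn c w)
    (hw : ∀ a : Arrival, a.Passive → G.OpenReach X Z a w → w ∉ Z → G.OpenReach X Z .tail w)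
    (hf : G.solid f c) : G.OpenReach X Z .tail f := by
  by_cases hc : c ∈ Z
  · exact h.2.step (.solidIn hf (by simp [hc]))
  · rcases (h.turn_of_uconn hcw hw).resolve_left hc with hit | ⟨a, ha, hloose⟩
    · exact hit.step (.solidIn hf (by simp))
    · exact hloose.step (.solidIn hf (by simp [ha, hc]))

/-- The nodes outside `Z` that belong to the side of `X`. -/
def NearSide (G : PreGraph V) (X Z : Finset V) (v : V) : Prop :=
  v ∉ Z ∧ (G.OpenReach X Z .tail v ∨ G.OpenReach X Z .undirected v ∨ G.SolidReach X Z v)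

theorem NearSide.exists_passive (h : G.NearSide X Z v) :
    ∃ a : Arrival, a.Passive ∧ G.OpenReach X Z a v := by
  rcases h.2 with h | h | h
  exacts [⟨_, by simp [Arrival.Passive], h⟩, ⟨_, by simp [Arrival.Passive], h⟩,
    ⟨_, by simp [Arrival.Passive], h.1⟩]

variable [DecidableEq V]

/-- When `X` and `Y` are separated, one can turn back at every ancestral node. -/
theorem Ancestral.turn (hw : G.Ancestral (X ∪ Y ∪ Z) w)
    (hsep : ∀ a c, G.OpenReach X Z a c → a.Passive → c ∉ Z → c ∉ Y)
    (a : Arrival) (ha : a.Passive) (h : G.OpenReach X Z a w) (hwZ : w ∉ Z) :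
    G.OpenReach X Z .tail w := by
  induction hw generalizing a with
  | @base u hu =>
    rcases Finset.mem_union.1 hu with hu | hu
    · rcases Finset.mem_union.1 hu with hu | hu
      · exact .start hu
      · exact absurd hu (hsep a u h ha hwZ)
    · exact absurd hu hwZ
  | @mother m w _ hmw ih =>
    have hdash := h.step (.dashedOut ha hwZ hmw)
    by_cases hw : w ∈ Z
    · exact hdash.step (.dashedIn hmw (by simp [hw]))
    · exact (ih _ (by simp [Arrival.Passive]) hdash hw).step (.dashedIn hmw (by simp [hw]))
  | @father f k w _ hkw hfk ih =>
    exact (h.solidReach ha hwZ hfk).turn_to_father hkw ih hfk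

theorem SolidReach.tail_of_solid (h : G.SolidReach X Z c) (hcd : G.uconn c d)
    (hd : G.InAncestralComponent (X ∪ Y ∪ Z) d)
    (hsep : ∀ a c, G.OpenReach X Z a c → a.Passive → c ∉ Z → c ∉ Y) (hf : G.solid f d) :
    G.OpenReach X Z .tail f := by
  obtain ⟨w, hw, hdw⟩ := hd
  rcases h.uconn hcd with hs | hit
  · exact hs.turn_to_father hdw (hw.turn hsep) hf
  · exact hit.step (.solidIn hf (by simp))

theorem NearSide.selfOrMother (h : G.NearSide X Z v) (hv : G.SelfOrMother (X ∪ Y ∪ Z) v c)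
    (hsep : ∀ a c, G.OpenReach X Z a c → a.Passive → c ∉ Z → c ∉ Y) :
    G.NearSide X Z c ∨ c ∈ Z ∧ G.OpenReach X Z .dashed c := by
  rcases hv with rfl | ⟨hc, hvc⟩
  · exact Or.inl h
  · obtain ⟨a, ha, hav⟩ := h.exists_passive
    have hdash := hav.step (.dashedOut ha h.1 hvc)
    by_cases hcZ : c ∈ Z
    · exact Or.inr ⟨hcZ, hdash⟩
    · exact Or.inl ⟨hcZ, Or.inl (hc.turn hsep _ (by simp [Arrival.Passive]) hdash hcZ)⟩

theorem nearSide_of_selfOrMother (hw : G.SelfOrMother (X ∪ Y ∪ Z) w c) (hwZ : w ∉ Z)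
    (hsep : ∀ a c, G.OpenReach X Z a c → a.Passive → c ∉ Z → c ∉ Y)
    (h : G.NearSide X Z c ∨ c ∈ Z ∧ G.OpenReach X Z .dashed c ∨
      G.OpenReach X Z .undirected c ∨ G.SolidReach X Z c) : G.NearSide X Z w := by
  rcases hw with rfl | ⟨hc, hwc⟩
  · exact h.elim id fun h => ⟨hwZ, Or.inr (h.resolve_left fun h => hwZ h.1)⟩
  · refine ⟨hwZ, Or.inl ?_⟩
    by_cases hcZ : c ∈ Z
    · rcases h.resolve_left fun h => h.1 hcZ with ⟨-, h⟩ | h | h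
      · exact h.step (.dashedIn hwc (by simp [hcZ]))
      · exact h.step (.dashedIn hwc (by simp [hcZ]))
      · exact h.1.step (.dashedIn hwc (by simp [hcZ]))
    · have hpass : ∃ a : Arrival, a.Passive ∧ G.OpenReach X Z a c := by
        rcases h with h | ⟨h, -⟩ | h
        · exact h.exists_passive
        · exact absurd h hcZ
        · exact NearSide.exists_passive ⟨hcZ, Or.inr h⟩
      obtain ⟨a, ha, hac⟩ := hpass
      exact (hc.turn hsep a ha hac hcZ).step (.dashedIn hwc (by simp [hcZ]))

theorem NearSide.of_precisionLink (h : G.NearSide X Z v)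
    (hvw : G.PrecisionLink (X ∪ Y ∪ Z) v w) (hwZ : w ∉ Z)
    (hsep : ∀ a c, G.OpenReach X Z a c → a.Passive → c ∉ Z → c ∉ Y) : G.NearSide X Z w := by
  rcases hvw with ⟨i, j, hi, rfl | hij, hj⟩ | ⟨i, hi, hiN, hwi⟩ | ⟨i, -, hvi, hw⟩ |
    ⟨i, j, hvi, hij, hj, hwj⟩
  · exact nearSide_of_selfOrMother hj hwZ hsep ((h.selfOrMother hi hsep).imp id Or.inl)
  · refine nearSide_of_selfOrMother hj hwZ hsep (Or.inr (Or.inr ?_))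
    rcases h.selfOrMother hi hsep with ⟨hiZ, h | h | h⟩ | ⟨hiZ, h⟩
    · exact Or.inl (h.step (.und hij (by simp [Arrival.Loose, hiZ])))
    · exact Or.inl (h.step (.und hij (by simp [Arrival.Loose, hiZ])))
    · exact Or.inr (h.und hiZ hij)
    · exact Or.inl (h.step (.und hij (by simp [hiZ])))
  · refine ⟨hwZ, Or.inl ?_⟩
    rcases h.selfOrMother hi hsep with ⟨hiZ, h | h | h⟩ | ⟨hiZ, h⟩
    · exact h.step (.solidIn hwi (by simp [Arrival.Loose, hiZ]))
    · exact h.step (.solidIn hwi (by simp [Arrival.Loose, hiZ]))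
    · exact h.tail_of_solid .refl hiN hsep hwi
    · exact h.step (.solidIn hwi (by simp [hiZ]))
  · obtain ⟨a, ha, hav⟩ := h.exists_passive
    exact nearSide_of_selfOrMother hw hwZ hsep
      (Or.inr (Or.inr (Or.inr (hav.solidReach ha h.1 hvi))))
  · obtain ⟨a, ha, hav⟩ := h.exists_passive
    exact ⟨hwZ, Or.inl ((hav.solidReach ha h.1 hvi).tail_of_solid hij hj hsep hwj)⟩

end Separation

section Structural

variable [Fintype V] [DecidableEq V] {G : PreGraph V} {B C P L S : Matrix V V ℝ}

/-- A Gaussian distribution agreeing with `S` on the ancestral nodes, with a sparse precision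
matrix. -/
theorem IsStructural.exists_precision (h : G.IsStructural B C P L S) (hS : S.PosDef)
    (U : Finset V) : ∃ Γ J : Matrix V V ℝ, Γ.PosDef ∧ J * Γ = 1 ∧
      (∀ v w, G.Ancestral U v → G.Ancestral U w → Γ v w = S v w) ∧
      ∀ v w, J v w ≠ 0 → G.PrecisionLink U v w := by
  let B' : Matrix V V ℝ := Matrix.of fun i j => if G.Ancestral U i then B i j else 0
  let C' : Matrix V V ℝ := Matrix.of fun i j => if G.InAncestralComponent U i then C i j else 0
  let T : Matrix V V ℝ := 1 - B' - L * C'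
  let M : Matrix V V ℝ := 1 - (B - B') - L * (C - C')
  have hB' : ∀ i j, B' i j ≠ 0 → G.Ancestral U i ∧ G.dashed j i := fun i j hne => by
    by_cases hi : G.Ancestral U i
    · exact ⟨hi, h.dashed_of_ne i j (by simpa [B', hi] using hne)⟩
    · simp [B', hi] at hne
  have hC' : ∀ i j, C' i j ≠ 0 → G.InAncestralComponent U i ∧ G.solid j i := fun i j hne => by
    by_cases hi : G.InAncestralComponent U i
    · exact ⟨hi, h.solid_of_ne i j (by simpa [C', hi] using hne)⟩
    · simp [C', hi] at hne
  have hBanc : ∀ i j, B' i j ≠ 0 → G.Ancestral U j := fun i j hne =>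
    .mother (hB' i j hne).1 (hB' i j hne).2
  have hCanc : ∀ i j, C' i j ≠ 0 → G.Ancestral U j := fun i j hne => by
    obtain ⟨⟨w, hw, hiw⟩, hji⟩ := hC' i j hne
    exact .father hw hiw hji
  have hMrow : ∀ i, G.Ancestral U i → ∀ j, M i j = (1 : Matrix V V ℝ) i j := by
    intro i hi j
    have h₁ : (B - B') i j = 0 := by simp [B', hi]
    have h₂ : (L * (C - C')) i j = 0 := by
      refine Finset.sum_eq_zero fun k _ => ?_
      by_cases hk : L i k = 0
      · simp [hk]
      · have : G.InAncestralComponent U k := ⟨i, hi, uconn_symm (h.uconn_of_ne i k hk)⟩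
        simp [C', this]
    change (1 - (B - B') - L * (C - C')) i j = (1 : Matrix V V ℝ) i j
    rw [Matrix.sub_apply, Matrix.sub_apply, h₁, h₂, sub_zero, sub_zero]
  have hmulM : ∀ D : Matrix V V ℝ, (∀ i j, D i j ≠ 0 → G.Ancestral U j) → D * M = D := by
    intro D hD
    ext i j
    conv_rhs => rw [← Matrix.mul_one D]
    rw [Matrix.mul_apply, Matrix.mul_apply]
    refine Finset.sum_congr rfl fun k _ => ?_
    by_cases hk : D i k = 0
    · simp [hk]
    · rw [hMrow k (hD i k hk)]
  have hTM : T * M = 1 - B - L * C := by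
    have : T * M = M - B' * M - L * (C' * M) := by
      simp only [T, Matrix.sub_mul, Matrix.one_mul, Matrix.mul_assoc]
    rw [this, hmulM B' hBanc, hmulM C' hCanc]
    simp only [M, Matrix.mul_sub]
    abel
  have hLP : L * P = 1 := mul_eq_one_comm.1 h.mul_eq_one
  have hLt : Lᵀ = L := by
    have hSt : Sᵀ = S := (show S.IsSymm by simpa using hS.isHermitian).eq
    rw [← h.cov, Matrix.transpose_mul, Matrix.transpose_mul, Matrix.transpose_transpose, hSt,
      Matrix.mul_assoc]
  have hTM' : T * (M * S * Mᵀ * Tᵀ * P) = 1 := by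
    have : T * (M * S * Mᵀ * Tᵀ * P) = (T * M) * S * (T * M)ᵀ * P := by
      simp only [Matrix.transpose_mul, Matrix.mul_assoc]
    rw [this, hTM, h.cov, hLP]
  have hMdet : IsUnit M.det := by
    have hdet : (1 - B - L * C).det * (S.det * (1 - B - L * C).det * P.det) = 1 := by
      have hL := congrArg Matrix.det h.cov
      have hLP := congrArg Matrix.det hLP
      rw [Matrix.det_mul, Matrix.det_mul, Matrix.det_transpose] at hL
      rw [Matrix.det_mul, Matrix.det_one, ← hL] at hLP
      linear_combination hLP
    rw [← hTM, Matrix.det_mul, mul_comm T.det, mul_assoc] at hdet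
    exact IsUnit.of_mul_eq_one _ hdet
  refine ⟨M * S * Mᵀ, Tᵀ * P * T, ?_, ?_, ?_, ?_⟩
  · have := hS.mul_mul_conjTranspose_same (B := M)
      (Matrix.vecMul_injective_of_isUnit ((Matrix.isUnit_iff_isUnit_det _).2 hMdet))
    rwa [Matrix.conjTranspose_eq_transpose_of_trivial] at this
  · have h₁ : (M * S * Mᵀ * Tᵀ * P) * T = 1 := mul_eq_one_comm.1 hTM'
    rw [mul_eq_one_comm]
    simpa only [Matrix.mul_assoc] using h₁
  · intro v w hv hw
    have hrow : ∀ i, G.Ancestral U i → ∀ D : Matrix V V ℝ, ∀ j, (M * D) i j = D i j := by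
      intro i hi D j
      rw [Matrix.mul_apply]
      simp [hMrow i hi, Matrix.one_apply]
    rw [Matrix.mul_assoc, hrow v hv, ← Matrix.transpose_apply (S * Mᵀ), Matrix.transpose_mul,
      Matrix.transpose_transpose, hrow w hw, Matrix.transpose_apply]
  · intro v w hne
    obtain ⟨A, hAB⟩ : ∃ A : Matrix V V ℝ, A = 1 - B' := ⟨_, rfl⟩
    have hTA : T = A - L * C' := by rw [hAB]
    have hexp : Tᵀ * P * T = Aᵀ * (P * A) - Aᵀ * C' - C'ᵀ * A +
        C'ᵀ * (L * C') := by
      have h₁ : P * (L * C') = C' := by rw [← Matrix.mul_assoc, h.mul_eq_one, Matrix.one_mul]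
      have h₂ : ∀ D : Matrix V V ℝ, L * (P * D) = D := fun D => by
        rw [← Matrix.mul_assoc, hLP, Matrix.one_mul]
      have hTt : Tᵀ = Aᵀ - C'ᵀ * L := by
        rw [hTA, Matrix.transpose_sub, Matrix.transpose_mul, hLt]
      have hPT : P * T = P * A - C' := by rw [hTA, Matrix.mul_sub, h₁]
      rw [Matrix.mul_assoc, hPT, hTt, Matrix.sub_mul, Matrix.mul_sub, Matrix.mul_sub,
        Matrix.mul_assoc, h₂, Matrix.mul_assoc]
      abel
    have hA : ∀ i j, A i j ≠ 0 → G.SelfOrMother U j i := fun i j hne => by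
      by_contra hn
      rw [SelfOrMother, not_or] at hn
      have hB0 : B' i j = 0 := by
        by_contra hne'
        exact hn.2 (hB' i j hne')
      exact hne (by simp [hAB, hB0, Matrix.one_apply_ne (Ne.symm hn.1)])
    have hsum : ∀ D E : Matrix V V ℝ, (Dᵀ * E) v w ≠ 0 → ∃ i, D i v ≠ 0 ∧ E i w ≠ 0 := by
      intro D E hne
      obtain ⟨i, -, hi⟩ := Finset.exists_ne_zero_of_sum_ne_zero hne
      exact ⟨i, left_ne_zero_of_mul hi, right_ne_zero_of_mul hi⟩
    have hmul : ∀ (D E : Matrix V V ℝ) i, (D * E) i w ≠ 0 → ∃ j, D i j ≠ 0 ∧ E j w ≠ 0 := by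
      intro D E i hne
      obtain ⟨j, -, hj⟩ := Finset.exists_ne_zero_of_sum_ne_zero hne
      exact ⟨j, left_ne_zero_of_mul hj, right_ne_zero_of_mul hj⟩
    by_contra hn
    refine hne ?_
    rw [PrecisionLink, not_or, not_or, not_or] at hn
    have e₁ : (Aᵀ * (P * A)) v w = 0 := by
      by_contra hne'
      obtain ⟨i, hi, hi'⟩ := hsum _ _ hne'
      obtain ⟨j, hj, hj'⟩ := hmul _ _ i hi'
      exact hn.1 ⟨i, j, hA i v hi, h.und_of_ne i j hj, hA j w hj'⟩
    have e₂ : (Aᵀ * C') v w = 0 := by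
      by_contra hne'
      obtain ⟨i, hi, hi'⟩ := hsum _ _ hne'
      exact hn.2.1 ⟨i, hA i v hi, hC' i w hi'⟩
    have e₃ : (C'ᵀ * A) v w = 0 := by
      by_contra hne'
      obtain ⟨i, hi, hi'⟩ := hsum _ _ hne'
      exact hn.2.2.1 ⟨i, (hC' i v hi).1, (hC' i v hi).2, hA i w hi'⟩
    have e₄ : (C'ᵀ * (L * C')) v w = 0 := by
      by_contra hne'
      obtain ⟨i, hi, hi'⟩ := hsum _ _ hne'
      obtain ⟨j, hj, hj'⟩ := hmul _ _ i hi'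
      exact hn.2.2.2 ⟨i, j, (hC' i v hi).2, h.uconn_of_ne i j hj, hC' j w hj'⟩
    rw [hexp, Matrix.add_apply, Matrix.sub_apply, Matrix.sub_apply, e₁, e₂, e₃, e₄]
    simp

end Structural

end PreGraph

namespace ChainGraph

open PreGraph

theorem globalMP_of_isStructural [Fintype V] [DecidableEq V] {G : ChainGraph V}
    {B C P L S : Matrix V V ℝ} (hS : S.PosDef) (h : G.IsStructural B C P L S) :
    G.globalMP (gaussCI S) := by
  intro X Y Z ⟨_, hXZ, _⟩ hsep
  rw [sep_iff] at hsep
  obtain ⟨Γ, J, hΓ, hJΓ, hΓS, hJ⟩ := h.exists_precision hS (X ∪ Y ∪ Z)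
  have hanc : ∀ {T : Finset V}, T ⊆ X ∪ Y ∪ Z →
      T ⊆ Finset.univ.filter (G.Ancestral (X ∪ Y ∪ Z)) := fun hT v hv => by
    simpa using Ancestral.base (hT hv)
  refine gaussCI_congr (S := Γ) (W := Finset.univ.filter (G.Ancestral (X ∪ Y ∪ Z)))
    (hanc fun v hv => by simp [hv]) (hanc fun v hv => by simp [hv])
    (hanc fun v hv => by simp [hv]) (fun v hv w hw => hΓS v w (by simpa using hv)
      (by simpa using hw))
    (gaussCI_of_precision_block hΓ hJΓ (R := Finset.univ.filter (G.NearSide X Z)) ?_ ?_ ?_ ?_)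
  · intro x hx
    exact Finset.mem_filter.2 ⟨Finset.mem_univ _, Finset.disjoint_left.1 hXZ hx,
      Or.inl (.start hx)⟩
  · refine Finset.disjoint_left.2 fun v hv => ?_
    have hv : G.NearSide X Z v := by simpa using hv
    obtain ⟨a, ha, hav⟩ := hv.exists_passive
    exact hsep a v hav ha hv.1
  · refine Finset.disjoint_left.2 fun v hv => ?_
    have hv : G.NearSide X Z v := by simpa using hv
    exact hv.1
  · intro v hv w hw hwZ
    by_contra hne
    have hv : G.NearSide X Z v := by simpa using hv
    exact hw (by simpa using hv.of_precisionLink (hJ v w hne) hwZ hsep)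

end ChainGraph

/-- **Corollary 1.** The global, block-recursive, local and pairwise Markov properties with
respect to a UCG are all equivalent for Gaussian distributions. -/
theorem global_blockRec_local_pairwise_equivalent
    {V : Type*} [Fintype V] [DecidableEq V] (G : ChainGraph V) (hG : G.IsUCG)
    (S : Matrix V V ℝ) (hS : S.PosDef) :
    (G.toPreGraph.globalMP (gaussCI S) ↔ G.toPreGraph.blockRecMP (gaussCI S)) ∧
    (G.toPreGraph.globalMP (gaussCI S) ↔ G.toPreGraph.localMP (gaussCI S)) ∧
    (G.toPreGraph.globalMP (gaussCI S) ↔ G.toPreGraph.pairwiseMP (gaussCI S)) := by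
  have localMP_of_globalMP : G.globalMP (gaussCI S) → G.localMP (gaussCI S) :=
    ChainGraph.localMP_of_globalMP
  have blockRecMP_of_localMP : G.localMP (gaussCI S) → G.blockRecMP (gaussCI S) :=
    ChainGraph.blockRecMP_of_localMP hS
  have pairwiseMP_of_blockRecMP : G.blockRecMP (gaussCI S) → G.pairwiseMP (gaussCI S) :=
    ChainGraph.pairwiseMP_of_blockRecMP hS
  have globalMP_of_pairwiseMP : G.pairwiseMP (gaussCI S) → G.globalMP (gaussCI S) := fun h =>
    let ⟨_, _, _, _, hstruct⟩ := ChainGraph.exists_isStructural hG hS h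
    ChainGraph.globalMP_of_isStructural hS hstruct
  exact ⟨⟨fun h => blockRecMP_of_localMP (localMP_of_globalMP h),
      fun h => globalMP_of_pairwiseMP (pairwiseMP_of_blockRecMP h)⟩,
    ⟨localMP_of_globalMP,
      fun h => globalMP_of_pairwiseMP (pairwiseMP_of_blockRecMP (blockRecMP_of_localMP h))⟩,
    ⟨fun h => pairwiseMP_of_blockRecMP (blockRecMP_of_localMP (localMP_of_globalMP h)),
      globalMP_of_pairwiseMP⟩⟩
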